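/- Let (L,d,λ) be a weak Lie 3-algebra over a commutative ring k, (p,i,h) a deformation retract of (L,d) onto (L′,d′), and equip (L′,d′) with the transferred weak Lie 3-algebra structure λ′. Then the maps i1 := i, i2 := −h∘λ2∘(i,i), i21 := −h∘λ21∘(i,i), and i3 := −h∘λ3∘(i,i,i) − h∘(λ2∘1(h∘λ2) − (λ2∘2(h∘λ2))^{1−(12)})∘(i,i,i) form a weak morphism (i1,i2,i21,i3): (L′,d′,λ′) → (L,d,λ) of weak Lie 3-algebras, i.e. they satisfy equations (M1)–(M8). -/

import Mathlib

namespace WL3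

open Finset

/-! ## Graded multilinear maps -/

/-- Cast along an equality of degrees. -/
def gcast {M : ℤ → Type} {i j : ℤ} (h : i = j) (x : M i) : M j := h ▸ x

/-- A degree-`r`, arity-`m` map between ℤ-graded types, given by its components on
homogeneous tuples: its component at degrees `d` maps `L (d 1) ⊗ ⋯ ⊗ L (d m)` to
`M (r + d 1 + ⋯ + d m)`. -/
abbrev MMap (L M : ℤ → Type) (m : ℕ) (r : ℤ) : Type :=
  ∀ d : Fin m → ℤ, (∀ j, L (d j)) → M (r + ∑ j, d j)

variable {L M N : ℤ → Type}

/-- Cast an `MMap` along equalities of arities and degrees. -/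
def mcast {m m' : ℕ} {r r' : ℤ} (hm : m = m') (hr : r = r') (μ : MMap L M m r) :
    MMap L M m' r' := by subst hm; subst hr; exact μ

/-- Koszul sign of the permutation `σ` acting on a tuple of homogeneous elements of
degrees `d`: `∏_{i<j, σ i > σ j} (-1)^(d i · d j)`. -/
def koszulSign {m : ℕ} (d : Fin m → ℤ) (σ : Equiv.Perm (Fin m)) : ℤ :=
  ∏ p ∈ Finset.univ.filter (fun p : Fin m × Fin m => p.1 < p.2 ∧ σ p.2 < σ p.1),
    (-1 : ℤ) ^ (d p.1 * d p.2).natAbs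

/-- The action `μ ↦ μ^σ`, `μ^σ(x₁,…,x_m) = ε(σ;x)·μ(x_{σ⁻¹1},…,x_{σ⁻¹m})`. -/
def pa [∀ i, AddCommGroup (M i)] {m : ℕ} {r : ℤ} (σ : Equiv.Perm (Fin m)) (μ : MMap L M m r) :
    MMap L M m r := fun d x =>
  koszulSign d σ •
    gcast (by rw [Equiv.sum_comp σ.symm d])
      (μ (fun j => d (σ.symm j)) (fun j => x (σ.symm j)))

/-- Degrees of the outer map in a partial composition. -/
def outDeg (m₁ m₂ n : ℕ) (s : ℤ) (d : Fin (m₁ + n + m₂) → ℤ) : Fin (m₁ + 1 + m₂) → ℤ :=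
  Fin.append
    (Fin.append (fun j : Fin m₁ => d (Fin.castAdd m₂ (Fin.castAdd n j)))
      (fun _ : Fin 1 => s + ∑ j : Fin n, d (Fin.castAdd m₂ (Fin.natAdd m₁ j))))
    (fun j : Fin m₂ => d (Fin.natAdd (m₁ + n) j))

theorem outDeg_left (m₁ m₂ n : ℕ) (s : ℤ) (d : Fin (m₁ + n + m₂) → ℤ) (j : Fin m₁) :
    outDeg m₁ m₂ n s d (Fin.castAdd m₂ (Fin.castAdd 1 j))
      = d (Fin.castAdd m₂ (Fin.castAdd n j)) := by
  simp [outDeg, Fin.append_left]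

theorem outDeg_mid (m₁ m₂ n : ℕ) (s : ℤ) (d : Fin (m₁ + n + m₂) → ℤ) (j : Fin 1) :
    outDeg m₁ m₂ n s d (Fin.castAdd m₂ (Fin.natAdd m₁ j))
      = s + ∑ j : Fin n, d (Fin.castAdd m₂ (Fin.natAdd m₁ j)) := by
  simp [outDeg, Fin.append_left, Fin.append_right]

theorem outDeg_right (m₁ m₂ n : ℕ) (s : ℤ) (d : Fin (m₁ + n + m₂) → ℤ) (j : Fin m₂) :
    outDeg m₁ m₂ n s d (Fin.natAdd (m₁ + 1) j) = d (Fin.natAdd (m₁ + n) j) := by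
  simp [outDeg, Fin.append_right]

theorem outDeg_sum (m₁ m₂ n : ℕ) (r s : ℤ) (d : Fin (m₁ + n + m₂) → ℤ) :
    r + ∑ j, outDeg m₁ m₂ n s d j = (r + s) + ∑ j, d j := by
  simp [outDeg, Fin.sum_univ_add, Fin.append_left, Fin.append_right]
  ring

/-- Partial (operadic) composition `μ ∘_{m₁+1} ν` of `μ` (of arity `m₁ + 1 + m₂`) with `ν`
inserted in the slot `m₁ + 1`, with the Koszul sign `(-1)^(|ν|·(d 1 + ⋯ + d m₁))`. -/
def pcomp [∀ i, AddCommGroup (L i)] [∀ i, AddCommGroup (M i)] (m₁ m₂ : ℕ) {n : ℕ} {r s : ℤ}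
    (μ : MMap L M (m₁ + 1 + m₂) r) (ν : MMap L L n s) : MMap L M (m₁ + n + m₂) (r + s) :=
  fun d x =>
    ((-1 : ℤ) ^ (s * ∑ j : Fin m₁, d (Fin.castAdd m₂ (Fin.castAdd n j))).natAbs) •
    gcast (outDeg_sum m₁ m₂ n r s d)
      (μ (outDeg m₁ m₂ n s d)
        (fun j => Fin.addCases (motive := fun t => L (outDeg m₁ m₂ n s d t))
          (fun j' => Fin.addCases (motive := fun t => L (outDeg m₁ m₂ n s d (Fin.castAdd m₂ t)))
            (fun j1 => gcast (outDeg_left m₁ m₂ n s d j1).symm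
              (x (Fin.castAdd m₂ (Fin.castAdd n j1))))
            (fun j0 => gcast (outDeg_mid m₁ m₂ n s d j0).symm
              (ν (fun j2 => d (Fin.castAdd m₂ (Fin.natAdd m₁ j2)))
                 (fun j2 => x (Fin.castAdd m₂ (Fin.natAdd m₁ j2)))))
            j')
          (fun j3 => gcast (outDeg_right m₁ m₂ n s d j3).symm (x (Fin.natAdd (m₁ + n) j3)))
          j))

/-- Composition `μ ∘ g` of an arity-1 map with an arity-`a` map. -/
def comp₁ {a : ℕ} {r s : ℤ} (μ : MMap M N 1 r) (g : MMap L M a s) : MMap L N a (r + s) :=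
  fun d x =>
    gcast (by rw [Fin.sum_univ_one]; ring)
      (μ (fun _ : Fin 1 => s + ∑ j, d j) (fun _ => g d x))

theorem sum2 (a b : ℕ) (r s₁ s₂ : ℤ) (d : Fin (a + b) → ℤ) :
    r + ∑ t : Fin 2, ![s₁ + ∑ j : Fin a, d (Fin.castAdd b j),
                       s₂ + ∑ j : Fin b, d (Fin.natAdd a j)] t
      = (r + (s₁ + s₂)) + ∑ j, d j := by
  simp [Fin.sum_univ_two, Fin.sum_univ_add]
  ring

/-- Full composition `μ ∘ (g₁, g₂)` with Koszul signs. -/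
def comp₂ [∀ i, AddCommGroup (N i)] {a b : ℕ} {r s₁ s₂ : ℤ}
    (μ : MMap M N 2 r) (g₁ : MMap L M a s₁) (g₂ : MMap L M b s₂) :
    MMap L N (a + b) (r + (s₁ + s₂)) :=
  fun d x =>
    ((-1 : ℤ) ^ (s₂ * ∑ j : Fin a, d (Fin.castAdd b j)).natAbs) •
    gcast (sum2 a b r s₁ s₂ d)
      (μ ![s₁ + ∑ j : Fin a, d (Fin.castAdd b j), s₂ + ∑ j : Fin b, d (Fin.natAdd a j)]
        (Fin.cons (gcast (by simp) (g₁ (fun j => d (Fin.castAdd b j)) (fun j => x (Fin.castAdd b j))))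
          (fun _ : Fin 1 => gcast (by simp) (g₂ (fun j => d (Fin.natAdd a j)) (fun j => x (Fin.natAdd a j))))))

theorem sum3 (a b c : ℕ) (r s₁ s₂ s₃ : ℤ) (d : Fin (a + b + c) → ℤ) :
    r + ∑ t : Fin 3, ![s₁ + ∑ j : Fin a, d (Fin.castAdd c (Fin.castAdd b j)),
                       s₂ + ∑ j : Fin b, d (Fin.castAdd c (Fin.natAdd a j)),
                       s₃ + ∑ j : Fin c, d (Fin.natAdd (a + b) j)] t
      = (r + (s₁ + s₂ + s₃)) + ∑ j, d j := by
  simp [Fin.sum_univ_three, Fin.sum_univ_add]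
  ring

/-- Full composition `μ ∘ (g₁, g₂, g₃)` with Koszul signs. -/
def comp₃ [∀ i, AddCommGroup (N i)] {a b c : ℕ} {r s₁ s₂ s₃ : ℤ}
    (μ : MMap M N 3 r) (g₁ : MMap L M a s₁) (g₂ : MMap L M b s₂) (g₃ : MMap L M c s₃) :
    MMap L N (a + b + c) (r + (s₁ + s₂ + s₃)) :=
  fun d x =>
    ((-1 : ℤ) ^ (s₂ * (∑ j : Fin a, d (Fin.castAdd c (Fin.castAdd b j)))
        + s₃ * ((∑ j : Fin a, d (Fin.castAdd c (Fin.castAdd b j)))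
          + ∑ j : Fin b, d (Fin.castAdd c (Fin.natAdd a j)))).natAbs) •
    gcast (sum3 a b c r s₁ s₂ s₃ d)
      (μ ![s₁ + ∑ j : Fin a, d (Fin.castAdd c (Fin.castAdd b j)),
           s₂ + ∑ j : Fin b, d (Fin.castAdd c (Fin.natAdd a j)),
           s₃ + ∑ j : Fin c, d (Fin.natAdd (a + b) j)]
        (Fin.cons (gcast (by simp)
            (g₁ (fun j => d (Fin.castAdd c (Fin.castAdd b j)))
                (fun j => x (Fin.castAdd c (Fin.castAdd b j)))))
          (Fin.cons (gcast (by simp)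
              (g₂ (fun j => d (Fin.castAdd c (Fin.natAdd a j)))
                  (fun j => x (Fin.castAdd c (Fin.natAdd a j)))))
            (fun _ : Fin 1 => gcast (by simp)
              (g₃ (fun j => d (Fin.natAdd (a + b) j))
                  (fun j => x (Fin.natAdd (a + b) j)))))))

theorem sum4 (a b c e : ℕ) (r s₁ s₂ s₃ s₄ : ℤ) (d : Fin (a + b + c + e) → ℤ) :
    r + ∑ t : Fin 4, ![s₁ + ∑ j : Fin a, d (Fin.castAdd e (Fin.castAdd c (Fin.castAdd b j))),
                       s₂ + ∑ j : Fin b, d (Fin.castAdd e (Fin.castAdd c (Fin.natAdd a j))),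
                       s₃ + ∑ j : Fin c, d (Fin.castAdd e (Fin.natAdd (a + b) j)),
                       s₄ + ∑ j : Fin e, d (Fin.natAdd (a + b + c) j)] t
      = (r + (s₁ + s₂ + s₃ + s₄)) + ∑ j, d j := by
  simp [Fin.sum_univ_four, Fin.sum_univ_add]
  ring

/-- Full composition `μ ∘ (g₁, g₂, g₃, g₄)` with Koszul signs. -/
def comp₄ [∀ i, AddCommGroup (N i)] {a b c e : ℕ} {r s₁ s₂ s₃ s₄ : ℤ}
    (μ : MMap M N 4 r) (g₁ : MMap L M a s₁) (g₂ : MMap L M b s₂) (g₃ : MMap L M c s₃)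
    (g₄ : MMap L M e s₄) :
    MMap L N (a + b + c + e) (r + (s₁ + s₂ + s₃ + s₄)) :=
  fun d x =>
    ((-1 : ℤ) ^ (s₂ * (∑ j : Fin a, d (Fin.castAdd e (Fin.castAdd c (Fin.castAdd b j))))
        + s₃ * ((∑ j : Fin a, d (Fin.castAdd e (Fin.castAdd c (Fin.castAdd b j))))
          + ∑ j : Fin b, d (Fin.castAdd e (Fin.castAdd c (Fin.natAdd a j))))
        + s₄ * ((∑ j : Fin a, d (Fin.castAdd e (Fin.castAdd c (Fin.castAdd b j))))
          + (∑ j : Fin b, d (Fin.castAdd e (Fin.castAdd c (Fin.natAdd a j))))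
          + ∑ j : Fin c, d (Fin.castAdd e (Fin.natAdd (a + b) j)))).natAbs) •
    gcast (sum4 a b c e r s₁ s₂ s₃ s₄ d)
      (μ ![s₁ + ∑ j : Fin a, d (Fin.castAdd e (Fin.castAdd c (Fin.castAdd b j))),
           s₂ + ∑ j : Fin b, d (Fin.castAdd e (Fin.castAdd c (Fin.natAdd a j))),
           s₃ + ∑ j : Fin c, d (Fin.castAdd e (Fin.natAdd (a + b) j)),
           s₄ + ∑ j : Fin e, d (Fin.natAdd (a + b + c) j)]
        (Fin.cons (gcast (by simp)
            (g₁ (fun j => d (Fin.castAdd e (Fin.castAdd c (Fin.castAdd b j))))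
                (fun j => x (Fin.castAdd e (Fin.castAdd c (Fin.castAdd b j))))))
          (Fin.cons (gcast (by simp)
              (g₂ (fun j => d (Fin.castAdd e (Fin.castAdd c (Fin.natAdd a j))))
                  (fun j => x (Fin.castAdd e (Fin.castAdd c (Fin.natAdd a j))))))
            (Fin.cons (gcast (by simp)
                (g₃ (fun j => d (Fin.castAdd e (Fin.natAdd (a + b) j)))
                    (fun j => x (Fin.castAdd e (Fin.natAdd (a + b) j)))))
              (fun _ : Fin 1 => gcast (by simp)
                (g₄ (fun j => d (Fin.natAdd (a + b + c) j))
                    (fun j => x (Fin.natAdd (a + b + c) j))))))))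

/-- The differential `∂(μ) = D' ∘ μ - (-1)^{|μ|} ∑ᵢ μ ∘ᵢ D`. -/
def bdry [∀ i, AddCommGroup (L i)] [∀ i, AddCommGroup (M i)] {m : ℕ} {r : ℤ}
    (D' : MMap M M 1 (-1)) (D : MMap L L 1 (-1)) (μ : MMap L M m r) : MMap L M m (-1 + r) :=
  comp₁ D' μ - ((-1 : ℤ) ^ r.natAbs) •
    ∑ p : Fin m, mcast (by have := p.isLt; omega) (by ring)
      (pcomp p.val (m - 1 - p.val) (mcast (by have := p.isLt; omega) rfl μ) D)

/-- The identity, as an `MMap`. -/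
def idm : MMap L L 1 0 := fun d x => gcast (by rw [Fin.sum_univ_one, zero_add]) (x 0)

/-- `μ ∘_{m₁+1} ν`, recast to a specified target degree `R`. -/
def pc [∀ i, AddCommGroup (L i)] [∀ i, AddCommGroup (M i)] (R : ℤ) (m₁ m₂ : ℕ) {n : ℕ}
    {r s : ℤ} (μ : MMap L M (m₁ + 1 + m₂) r) (ν : MMap L L n s)
    (h : r + s = R := by norm_num) : MMap L M (m₁ + n + m₂) R :=
  mcast rfl h (pcomp m₁ m₂ μ ν)

/-- `μ ∘ g`, recast to a specified target degree `R`. -/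
def fc1 (R : ℤ) {a : ℕ} {r s : ℤ} (μ : MMap M N 1 r) (g : MMap L M a s)
    (h : r + s = R := by norm_num) : MMap L N a R :=
  mcast rfl h (comp₁ μ g)

/-- `μ ∘ (g₁, g₂)`, recast to a specified target degree `R`. -/
def fc2 [∀ i, AddCommGroup (N i)] (R : ℤ) {a b : ℕ} {r s₁ s₂ : ℤ}
    (μ : MMap M N 2 r) (g₁ : MMap L M a s₁) (g₂ : MMap L M b s₂)
    (h : r + (s₁ + s₂) = R := by norm_num) : MMap L N (a + b) R :=
  mcast rfl h (comp₂ μ g₁ g₂)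

/-- `μ ∘ (g₁, g₂, g₃)`, recast to a specified target degree `R`. -/
def fc3 [∀ i, AddCommGroup (N i)] (R : ℤ) {a b c : ℕ} {r s₁ s₂ s₃ : ℤ}
    (μ : MMap M N 3 r) (g₁ : MMap L M a s₁) (g₂ : MMap L M b s₂) (g₃ : MMap L M c s₃)
    (h : r + (s₁ + s₂ + s₃) = R := by norm_num) : MMap L N (a + b + c) R :=
  mcast rfl h (comp₃ μ g₁ g₂ g₃)

/-- `μ ∘ (g₁, g₂, g₃, g₄)`, recast to a specified target degree `R`. -/
def fc4 [∀ i, AddCommGroup (N i)] (R : ℤ) {a b c e : ℕ} {r s₁ s₂ s₃ s₄ : ℤ}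
    (μ : MMap M N 4 r) (g₁ : MMap L M a s₁) (g₂ : MMap L M b s₂) (g₃ : MMap L M c s₃)
    (g₄ : MMap L M e s₄) (h : r + (s₁ + s₂ + s₃ + s₄) = R := by norm_num) :
    MMap L N (a + b + c + e) R :=
  mcast rfl h (comp₄ μ g₁ g₂ g₃ g₄)

/-- `∂(μ)`, recast to a specified target degree `R`. -/
def bd [∀ i, AddCommGroup (L i)] [∀ i, AddCommGroup (M i)] (R : ℤ) {m : ℕ} {r : ℤ}
    (D' : MMap M M 1 (-1)) (D : MMap L L 1 (-1)) (μ : MMap L M m r)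
    (h : -1 + r = R := by norm_num) : MMap L M m R :=
  mcast rfl h (bdry D' D μ)

/-- Multilinearity over `k` of the components of an `MMap`. -/
def IsMultilinear (k : Type) [CommRing k] {L M : ℤ → Type} [∀ i, AddCommGroup (L i)]
    [∀ i, AddCommGroup (M i)] [∀ i, Module k (L i)] [∀ i, Module k (M i)] {m : ℕ} {r : ℤ}
    (μ : MMap L M m r) : Prop :=
  ∀ (d : Fin m → ℤ) (x : ∀ j, L (d j)) (j : Fin m),
    (∀ a b : L (d j), μ d (Function.update x j (a + b))
        = μ d (Function.update x j a) + μ d (Function.update x j b)) ∧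
    (∀ (c : k) (a : L (d j)), μ d (Function.update x j (c • a)) = c • μ d (Function.update x j a))

/-! ## Permutations (0-indexed; a cycle `(a b c)` is `swap a b * swap b c`) -/

def P12 (m : ℕ) [NeZero m] : Equiv.Perm (Fin m) := Equiv.swap 0 1
def P13 (m : ℕ) [NeZero m] : Equiv.Perm (Fin m) := Equiv.swap 0 2
def P23 (m : ℕ) [NeZero m] : Equiv.Perm (Fin m) := Equiv.swap 1 2
def P34 (m : ℕ) [NeZero m] : Equiv.Perm (Fin m) := Equiv.swap 2 3
def P123 (m : ℕ) [NeZero m] : Equiv.Perm (Fin m) := Equiv.swap 0 1 * Equiv.swap 1 2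
def P132 (m : ℕ) [NeZero m] : Equiv.Perm (Fin m) := Equiv.swap 0 2 * Equiv.swap 2 1
def P234 (m : ℕ) [NeZero m] : Equiv.Perm (Fin m) := Equiv.swap 1 2 * Equiv.swap 2 3
def P243 (m : ℕ) [NeZero m] : Equiv.Perm (Fin m) := Equiv.swap 1 3 * Equiv.swap 3 2
def P1234 (m : ℕ) [NeZero m] : Equiv.Perm (Fin m) :=
  Equiv.swap 0 1 * Equiv.swap 1 2 * Equiv.swap 2 3
def P1432 (m : ℕ) [NeZero m] : Equiv.Perm (Fin m) :=
  Equiv.swap 0 3 * Equiv.swap 3 2 * Equiv.swap 2 1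
def P1342 (m : ℕ) [NeZero m] : Equiv.Perm (Fin m) :=
  Equiv.swap 0 2 * Equiv.swap 2 3 * Equiv.swap 3 1
def P13P24 (m : ℕ) [NeZero m] : Equiv.Perm (Fin m) := Equiv.swap 0 2 * Equiv.swap 1 3

end WL3
namespace WL3

open Finset

variable (k : Type) [CommRing k]

/-- A Leibniz 3-algebra structure: maps `l2, l3, l4` on a complex with differential `D`
satisfying the generalized Jacobi identities (L1)–(L4). -/
structure IsLeibniz3 {L : ℤ → Type} [∀ i, AddCommGroup (L i)] [∀ i, Module k (L i)]
    (D : MMap L L 1 (-1)) (l2 : MMap L L 2 0) (l3 : MMap L L 3 1) (l4 : MMap L L 4 2) :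
    Prop where
  lin2 : IsMultilinear k l2
  lin3 : IsMultilinear k l3
  lin4 : IsMultilinear k l4
  eqL1 : bd (-1) D D l2 = 0
  eqL2 : bd 0 D D l3 =
    pc 0 1 0 l2 l2 - pc 0 0 1 l2 l2 - pa (P12 3) (pc 0 1 0 l2 l2)
  eqL3 : bd 1 D D l4 =
    pc 1 0 1 l2 l3 + pc 1 1 0 l2 l3 - pa (P12 4) (pc 1 1 0 l2 l3)
      + pa (P123 4) (pc 1 1 0 l2 l3) - pc 1 0 2 l3 l2
      + pc 1 1 1 l3 l2 - pa (P12 4) (pc 1 1 1 l3 l2)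
      - pc 1 2 0 l3 l2 + pa (P23 4) (pc 1 2 0 l3 l2) - pa (P132 4) (pc 1 2 0 l3 l2)
  eqL4 : (0 : MMap L L 5 2) =
    pc 2 0 1 l2 l4 - pc 2 1 0 l2 l4 + pa (P12 5) (pc 2 1 0 l2 l4)
      - pa (P123 5) (pc 2 1 0 l2 l4) + pa (P1234 5) (pc 2 1 0 l2 l4)
      + pc 2 0 2 l3 l3 + pc 2 1 1 l3 l3 - pa (P12 5) (pc 2 1 1 l3 l3)
      + pa (P123 5) (pc 2 1 1 l3 l3) + pc 2 2 0 l3 l3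
      - pa (P23 5) (pc 2 2 0 l3 l3) + pa (P132 5) (pc 2 2 0 l3 l3)
      + pa (P234 5) (pc 2 2 0 l3 l3) - pa (P1342 5) (pc 2 2 0 l3 l3)
      + pa (P13P24 5) (pc 2 2 0 l3 l3)
      + pc 2 0 3 l4 l2 - pc 2 1 2 l4 l2 + pa (P12 5) (pc 2 1 2 l4 l2)
      + pc 2 2 1 l4 l2 - pa (P23 5) (pc 2 2 1 l4 l2) + pa (P132 5) (pc 2 2 1 l4 l2)
      - pc 2 3 0 l4 l2 + pa (P34 5) (pc 2 3 0 l4 l2) - pa (P243 5) (pc 2 3 0 l4 l2)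
      + pa (P1432 5) (pc 2 3 0 l4 l2)

/-- A weak Lie 3-algebra: a 3-term chain complex equipped with structure maps
`l2, l3, l4, l21, l211, l31, l32` satisfying (L1)–(L4) and (W1)–(W11). -/
structure WeakLie3 (L : ℤ → Type) [∀ i, AddCommGroup (L i)] [∀ i, Module k (L i)] where
  D : MMap L L 1 (-1)
  linD : IsMultilinear k D
  dd : fc1 (-2) D D = 0
  bound : ∀ i : ℤ, (i < 0 ∨ 2 < i) → ∀ x : L i, x = 0
  l2 : MMap L L 2 0
  l3 : MMap L L 3 1
  l4 : MMap L L 4 2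
  l21 : MMap L L 2 1
  l211 : MMap L L 2 2
  l31 : MMap L L 3 2
  l32 : MMap L L 3 2
  leib : IsLeibniz3 k D l2 l3 l4
  lin21 : IsMultilinear k l21
  lin211 : IsMultilinear k l211
  lin31 : IsMultilinear k l31
  lin32 : IsMultilinear k l32
  w1 : bd 0 D D l21 = l2 + pa (P12 2) l2
  w2 : bd 1 D D l211 = l21 - pa (P12 2) l21
  w3 : bd 1 D D l31 = l3 + pa (P12 3) l3 + pc 1 0 1 l2 l21
  w4 : bd 1 D D l32 = l3 + pa (P23 3) l3 - pc 1 1 0 l2 l21 + pc 1 0 1 l21 l2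
        + pa (P12 3) (pc 1 1 0 l21 l2)
  w5 : l211 + pa (P12 2) l211 = 0
  w6 : l31 - pa (P12 3) l31 = pc 2 0 1 l2 l211
  w7 : l31 - pa (P12 3) l32 + pa (P132 3) l31 - l32 + pa (P23 3) l31 - pa (P123 3) l32
        = pc 2 1 0 l21 l21 + pc 2 0 1 l21 l21 + pa (P12 3) (pc 2 1 0 l21 l21)
          + pa (P132 3) (pc 2 1 0 l211 l2)
  w8 : l32 - pa (P23 3) l32 = - pc 2 1 0 l2 l211 + pc 2 0 1 l211 l2
        + pa (P12 3) (pc 2 1 0 l211 l2)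
  w9 : l4 + pa (P12 4) l4 = pc 2 0 1 l2 l31 - pc 2 2 0 l31 l2
        + pa (P123 4) (pc 2 1 0 l2 l31) + pc 2 0 2 l3 l21
  w10 : l4 + pa (P23 4) l4 = pc 2 0 1 l2 l32 - pc 2 1 1 l3 l21 + pc 2 1 0 l2 l31
        - pc 2 0 2 l31 l2 - pa (P12 4) (pc 2 1 1 l31 l2) - pa (P132 4) (pc 2 2 0 l31 l2)
  w11 : l4 + pa (P34 4) l4 = pc 2 0 1 l21 l3 - pc 2 0 2 l32 l2 + pc 2 1 1 l32 l2
        - pa (P12 4) (pc 2 1 1 l32 l2) + pc 2 2 0 l3 l21 + pa (P23 4) (pc 2 2 0 l32 l2)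
        - pa (P132 4) (pc 2 2 0 l32 l2) + pc 2 1 0 l2 l32 - pa (P12 4) (pc 2 1 0 l2 l32)
        + pa (P123 4) (pc 2 1 0 l21 l3)

end WL3
namespace WL3

open Finset

variable (k : Type) [CommRing k]

/-- A weak morphism of weak Lie 3-algebras `(f1,f2,f21,f3) : A → B`, i.e. a solution of
equations (M1)–(M8). -/
structure IsWeakMorphism {L M : ℤ → Type} [∀ i, AddCommGroup (L i)] [∀ i, Module k (L i)]
    [∀ i, AddCommGroup (M i)] [∀ i, Module k (M i)]
    (A : WeakLie3 k L) (B : WeakLie3 k M)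
    (f1 : MMap L M 1 0) (f2 : MMap L M 2 1) (f21 : MMap L M 2 2) (f3 : MMap L M 3 2) :
    Prop where
  lin1 : IsMultilinear k f1
  lin2 : IsMultilinear k f2
  lin21 : IsMultilinear k f21
  lin3 : IsMultilinear k f3
  m1 : bd (-1) B.D A.D f1 = 0
  m2 : bd 0 B.D A.D f2 = fc1 0 f1 A.l2 - fc2 0 B.l2 f1 f1
  m3 : bd 1 B.D A.D f3 = fc1 1 f1 A.l3 - pc 1 1 0 f2 A.l2 + pc 1 0 1 f2 A.l2
        + pa (P12 3) (pc 1 1 0 f2 A.l2) - fc3 1 B.l3 f1 f1 f1 - fc2 1 B.l2 f1 f2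
        + fc2 1 B.l2 f2 f1 + pa (P12 3) (fc2 1 B.l2 f1 f2)
  m4 : fc1 2 f1 A.l4 - fc4 2 B.l4 f1 f1 f1 f1 =
        pc 2 0 1 f2 A.l3 + pc 2 1 0 f2 A.l3 - pa (P12 4) (pc 2 1 0 f2 A.l3)
        + pa (P123 4) (pc 2 1 0 f2 A.l3) - pc 2 0 2 f3 A.l2 + pc 2 1 1 f3 A.l2
        - pa (P12 4) (pc 2 1 1 f3 A.l2) - pc 2 2 0 f3 A.l2 + pa (P23 4) (pc 2 2 0 f3 A.l2)
        - pa (P132 4) (pc 2 2 0 f3 A.l2) + fc2 2 B.l2 f3 f1 + fc2 2 B.l2 f1 f3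
        - pa (P12 4) (fc2 2 B.l2 f1 f3) + pa (P123 4) (fc2 2 B.l2 f1 f3)
        - fc2 2 B.l2 f2 f2 + pa (P23 4) (fc2 2 B.l2 f2 f2) - pa (P132 4) (fc2 2 B.l2 f2 f2)
        + fc3 2 B.l3 f2 f1 f1 - fc3 2 B.l3 f1 f2 f1 + pa (P12 4) (fc3 2 B.l3 f1 f2 f1)
        + fc3 2 B.l3 f1 f1 f2 - pa (P23 4) (fc3 2 B.l3 f1 f1 f2)
        + pa (P132 4) (fc3 2 B.l3 f1 f1 f2)
  m5 : bd 1 B.D A.D f21 = - f2 - pa (P12 2) f2 + fc1 1 f1 A.l21 - fc2 1 B.l21 f1 f1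
  m6 : fc1 2 f1 A.l211 - fc2 2 B.l211 f1 f1 = f21 - pa (P12 2) f21
  m7 : fc1 2 f1 A.l31 - fc3 2 B.l31 f1 f1 f1 =
        f3 + pa (P12 3) f3 + pc 2 0 1 f2 A.l21 + fc2 2 B.l2 f21 f1
  m8 : fc1 2 f1 A.l32 - fc3 2 B.l32 f1 f1 f1 =
        f3 + pa (P23 3) f3 - pc 2 1 0 f2 A.l21 + pc 2 0 1 f21 A.l2
        + pa (P12 3) (pc 2 1 0 f21 A.l2) - fc2 2 B.l2 f1 f21 - fc2 2 B.l21 f2 f1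
        - pa (P12 3) (fc2 2 B.l21 f1 f2)

/-- A morphism of (semi-strict) Lie 3-algebras / Leibniz 3-algebras: equations (M1)–(M4)
for structure maps `(a2,a3,a4)` on the source and `(b2,b3,b4)` on the target. -/
structure IsLeibMorphism {L M : ℤ → Type} [∀ i, AddCommGroup (L i)] [∀ i, Module k (L i)]
    [∀ i, AddCommGroup (M i)] [∀ i, Module k (M i)]
    (DL : MMap L L 1 (-1)) (DM : MMap M M 1 (-1))
    (a2 : MMap L L 2 0) (a3 : MMap L L 3 1) (a4 : MMap L L 4 2)
    (b2 : MMap M M 2 0) (b3 : MMap M M 3 1) (b4 : MMap M M 4 2)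
    (f1 : MMap L M 1 0) (f2 : MMap L M 2 1) (f3 : MMap L M 3 2) : Prop where
  lin1 : IsMultilinear k f1
  lin2 : IsMultilinear k f2
  lin3 : IsMultilinear k f3
  m1 : bd (-1) DM DL f1 = 0
  m2 : bd 0 DM DL f2 = fc1 0 f1 a2 - fc2 0 b2 f1 f1
  m3 : bd 1 DM DL f3 = fc1 1 f1 a3 - pc 1 1 0 f2 a2 + pc 1 0 1 f2 a2
        + pa (P12 3) (pc 1 1 0 f2 a2) - fc3 1 b3 f1 f1 f1 - fc2 1 b2 f1 f2
        + fc2 1 b2 f2 f1 + pa (P12 3) (fc2 1 b2 f1 f2)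
  m4 : fc1 2 f1 a4 - fc4 2 b4 f1 f1 f1 f1 =
        pc 2 0 1 f2 a3 + pc 2 1 0 f2 a3 - pa (P12 4) (pc 2 1 0 f2 a3)
        + pa (P123 4) (pc 2 1 0 f2 a3) - pc 2 0 2 f3 a2 + pc 2 1 1 f3 a2
        - pa (P12 4) (pc 2 1 1 f3 a2) - pc 2 2 0 f3 a2 + pa (P23 4) (pc 2 2 0 f3 a2)
        - pa (P132 4) (pc 2 2 0 f3 a2) + fc2 2 b2 f3 f1 + fc2 2 b2 f1 f3
        - pa (P12 4) (fc2 2 b2 f1 f3) + pa (P123 4) (fc2 2 b2 f1 f3)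
        - fc2 2 b2 f2 f2 + pa (P23 4) (fc2 2 b2 f2 f2) - pa (P132 4) (fc2 2 b2 f2 f2)
        + fc3 2 b3 f2 f1 f1 - fc3 2 b3 f1 f2 f1 + pa (P12 4) (fc3 2 b3 f1 f2 f1)
        + fc3 2 b3 f1 f1 f2 - pa (P23 4) (fc3 2 b3 f1 f1 f2)
        + pa (P132 4) (fc3 2 b3 f1 f1 f2)

/-- A deformation retract `(p, i, h)` of `(L, D)` onto `(L', D')`:
`p`, `i` are chain maps, `id - i∘p = D∘h + h∘D` and `p∘i = id`. -/
structure IsDefRetract {L L' : ℤ → Type} [∀ i, AddCommGroup (L i)] [∀ i, Module k (L i)]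
    [∀ i, AddCommGroup (L' i)] [∀ i, Module k (L' i)]
    (D : MMap L L 1 (-1)) (D' : MMap L' L' 1 (-1))
    (p : MMap L L' 1 0) (i : MMap L' L 1 0) (h : MMap L L 1 1) : Prop where
  linp : IsMultilinear k p
  lini : IsMultilinear k i
  linh : IsMultilinear k h
  chainp : bd (-1) D' D p = 0
  chaini : bd (-1) D D' i = 0
  homotopy : idm - fc1 0 i p = fc1 0 D h + fc1 0 h D
  retract : fc1 0 p i = idm

/-- A weak Lie 2-algebra in the sense of Roytenberg (a 2-term truncation of a weak
Lie 3-algebra). -/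
structure WeakLie2 (L : ℤ → Type) [∀ i, AddCommGroup (L i)] [∀ i, Module k (L i)] where
  D : MMap L L 1 (-1)
  linD : IsMultilinear k D
  dd : fc1 (-2) D D = 0
  bound : ∀ i : ℤ, (i < 0 ∨ 1 < i) → ∀ x : L i, x = 0
  l2 : MMap L L 2 0
  l3 : MMap L L 3 1
  l21 : MMap L L 2 1
  lin2 : IsMultilinear k l2
  lin3 : IsMultilinear k l3
  lin21 : IsMultilinear k l21
  e1 : bd (-1) D D l2 = 0
  e2 : bd 0 D D l3 = pc 0 1 0 l2 l2 - pc 0 0 1 l2 l2 - pa (P12 3) (pc 0 1 0 l2 l2)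
  e3 : (0 : MMap L L 4 1) =
    pc 1 0 1 l2 l3 + pc 1 1 0 l2 l3 - pa (P12 4) (pc 1 1 0 l2 l3)
      + pa (P123 4) (pc 1 1 0 l2 l3) - pc 1 0 2 l3 l2
      + pc 1 1 1 l3 l2 - pa (P12 4) (pc 1 1 1 l3 l2)
      - pc 1 2 0 l3 l2 + pa (P23 4) (pc 1 2 0 l3 l2) - pa (P132 4) (pc 1 2 0 l3 l2)
  e4 : bd 0 D D l21 = l2 + pa (P12 2) l2
  e5 : (0 : MMap L L 2 1) = l21 - pa (P12 2) l21
  e6 : (0 : MMap L L 3 1) = l3 + pa (P12 3) l3 + pc 1 0 1 l2 l21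
  e7 : (0 : MMap L L 3 1) = l3 + pa (P23 3) l3 - pc 1 1 0 l2 l21 + pc 1 0 1 l21 l2
        + pa (P12 3) (pc 1 1 0 l21 l2)

end WL3
namespace WL3

open Finset

section Transfer

variable {k : Type} [CommRing k] {L L' : ℤ → Type}
  [∀ i, AddCommGroup (L i)] [∀ i, Module k (L i)]
  [∀ i, AddCommGroup (L' i)] [∀ i, Module k (L' i)]
variable (A : WeakLie3 k L) (p : MMap L L' 1 0) (i : MMap L' L 1 0) (h : MMap L L 1 1)

/-- `h ∘ λ2` -/
def hl2 : MMap L L 2 1 := fc1 1 h A.l2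
/-- `h ∘ λ3` -/
def hl3 : MMap L L 3 2 := fc1 2 h A.l3
/-- `h ∘ λ21` -/
def hl21 : MMap L L 2 2 := fc1 2 h A.l21

/-- Transferred `λ2' = p ∘ λ2 ∘ (i,i)`. -/
def tl2 : MMap L' L' 2 0 := fc1 0 p (fc2 0 A.l2 i i)

/-- Transferred `λ3'`. -/
def tl3 : MMap L' L' 3 1 :=
  fc1 1 p (fc3 1 A.l3 i i i)
  + fc1 1 p (fc3 1 (pc 1 0 1 A.l2 (hl2 A h)
      - (pc 1 1 0 A.l2 (hl2 A h) - pa (P12 3) (pc 1 1 0 A.l2 (hl2 A h)))) i i i)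

/-- Transferred `λ4'`. -/
def tl4 : MMap L' L' 4 2 :=
  fc1 2 p (fc4 2 A.l4 i i i i)
  - fc1 2 p (fc4 2
      (pc 2 0 1 A.l2 (hl3 A h)
        + (pc 2 1 0 A.l2 (hl3 A h) - pa (P12 4) (pc 2 1 0 A.l2 (hl3 A h))
            + pa (P123 4) (pc 2 1 0 A.l2 (hl3 A h)))
        + pc 2 0 2 A.l3 (hl2 A h)
        - (pc 2 1 1 A.l3 (hl2 A h) - pa (P12 4) (pc 2 1 1 A.l3 (hl2 A h)))
        + (pc 2 2 0 A.l3 (hl2 A h) - pa (P23 4) (pc 2 2 0 A.l3 (hl2 A h))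
            + pa (P132 4) (pc 2 2 0 A.l3 (hl2 A h)))) i i i i)
  - fc1 2 p (fc4 2
      (pc 2 0 2 (pc 1 0 1 A.l2 (hl2 A h)) (hl2 A h)
        - (pc 2 1 1 (pc 1 0 1 A.l2 (hl2 A h)) (hl2 A h)
            - pa (P12 4) (pc 2 1 1 (pc 1 0 1 A.l2 (hl2 A h)) (hl2 A h)))
        + (fc2 2 A.l2 (hl2 A h) (hl2 A h) - pa (P23 4) (fc2 2 A.l2 (hl2 A h) (hl2 A h))
            + pa (P132 4) (fc2 2 A.l2 (hl2 A h) (hl2 A h)))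
        + (pc 2 1 1 (pc 1 1 0 A.l2 (hl2 A h)) (hl2 A h)
            - pa (P12 4) (pc 2 1 1 (pc 1 1 0 A.l2 (hl2 A h)) (hl2 A h))
            + pa (P123 4) (pc 2 1 1 (pc 1 1 0 A.l2 (hl2 A h)) (hl2 A h)))
        - (pc 2 2 0 (pc 1 1 0 A.l2 (hl2 A h)) (hl2 A h)
            - pa (P12 4) (pc 2 2 0 (pc 1 1 0 A.l2 (hl2 A h)) (hl2 A h))
            + pa (P123 4) (pc 2 2 0 (pc 1 1 0 A.l2 (hl2 A h)) (hl2 A h))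
            - pa (P23 4) (pc 2 2 0 (pc 1 1 0 A.l2 (hl2 A h)) (hl2 A h))
            + pa (P132 4) (pc 2 2 0 (pc 1 1 0 A.l2 (hl2 A h)) (hl2 A h))
            - pa (P13 4) (pc 2 2 0 (pc 1 1 0 A.l2 (hl2 A h)) (hl2 A h)))) i i i i)

/-- Transferred `λ21' = p ∘ λ21 ∘ (i,i)`. -/
def tl21 : MMap L' L' 2 1 := fc1 1 p (fc2 1 A.l21 i i)

/-- Transferred `λ211' = p ∘ λ211 ∘ (i,i)`. -/
def tl211 : MMap L' L' 2 2 := fc1 2 p (fc2 2 A.l211 i i)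

/-- Transferred `λ31'`. -/
def tl31 : MMap L' L' 3 2 :=
  fc1 2 p (fc3 2 A.l31 i i i) - fc1 2 p (fc3 2 (pc 2 0 1 A.l2 (hl21 A h)) i i i)

/-- Transferred `λ32'`. -/
def tl32 : MMap L' L' 3 2 :=
  fc1 2 p (fc3 2 A.l32 i i i)
  + fc1 2 p (fc3 2 (pc 2 0 1 A.l21 (hl2 A h) + pc 2 1 0 A.l2 (hl21 A h)
      + pa (P12 3) (pc 2 1 0 A.l21 (hl2 A h))) i i i)

/-- Extension of `i`: `i₂ = -h ∘ λ2 ∘ (i,i)`. -/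
def ti2 : MMap L' L 2 1 := - fc1 1 h (fc2 0 A.l2 i i)

/-- Extension of `i`: `i₂₁ = -h ∘ λ21 ∘ (i,i)`. -/
def ti21 : MMap L' L 2 2 := - fc1 2 h (fc2 1 A.l21 i i)

/-- Extension of `i`: `i₃`. -/
def ti3 : MMap L' L 3 2 :=
  - fc1 2 h (fc3 1 A.l3 i i i)
  - fc1 2 h (fc3 1 (pc 1 0 1 A.l2 (hl2 A h)
      - (pc 1 1 0 A.l2 (hl2 A h) - pa (P12 3) (pc 1 1 0 A.l2 (hl2 A h)))) i i i)

end Transfer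

section Skew

variable (k : Type) [CommRing k] [Invertible (2 : k)] [Invertible (3 : k)]
variable {L M : ℤ → Type} [∀ i, AddCommGroup (L i)] [∀ i, Module k (L i)]
  [∀ i, AddCommGroup (M i)] [∀ i, Module k (M i)]

/-- Skew-symmetrization `λ̄2` of a weak Lie 3-algebra. -/
def skew2 (A : WeakLie3 k L) : MMap L L 2 0 :=
  (⅟ (2 : k)) • ∑ σ : Equiv.Perm (Fin 2), (Equiv.Perm.sign σ : ℤ) • pa σ A.l2

/-- Skew-symmetrization `λ̄3` of a weak Lie 3-algebra. -/
def skew3 (A : WeakLie3 k L) : MMap L L 3 1 :=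
  (⅟ (2 : k) * ⅟ (3 : k)) • ∑ σ : Equiv.Perm (Fin 3), (Equiv.Perm.sign σ : ℤ) • pa σ A.l3
  - (⅟ (2 : k) * ⅟ (2 : k) * ⅟ (2 : k) * ⅟ (3 : k)) •
      ∑ σ : Equiv.Perm (Fin 3), (Equiv.Perm.sign σ : ℤ) •
        pa σ (pc 1 0 1 A.l21 A.l2 + pc 1 1 0 A.l21 A.l2)

/-- Skew-symmetrization `λ̄4` of a weak Lie 3-algebra. -/
def skew4 (A : WeakLie3 k L) : MMap L L 4 2 :=
  (⅟ (2 : k) * ⅟ (2 : k) * ⅟ (2 : k) * ⅟ (3 : k)) •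
      ∑ σ : Equiv.Perm (Fin 4), (Equiv.Perm.sign σ : ℤ) • pa σ A.l4
  + (⅟ (2 : k) * ⅟ (2 : k) * ⅟ (2 : k) * ⅟ (2 : k) * ⅟ (3 : k)) •
      ∑ σ : Equiv.Perm (Fin 4), (Equiv.Perm.sign σ : ℤ) •
        pa σ (pc 2 0 1 A.l21 A.l3 - pc 2 0 2 A.l31 A.l2 + pc 2 1 1 A.l32 A.l2
          - pc 2 1 0 A.l21 A.l3 - pc 2 1 1 A.l31 A.l2 + pc 2 2 0 A.l32 A.l2)

/-- Skew-symmetrization `f̄2` of the second component of a weak morphism. -/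
def skewMor2 (f2 : MMap L M 2 1) : MMap L M 2 1 :=
  (⅟ (2 : k)) • ∑ σ : Equiv.Perm (Fin 2), (Equiv.Perm.sign σ : ℤ) • pa σ f2

/-- Skew-symmetrization `f̄3` of the third component of a weak morphism `A → B`. -/
def skewMor3 (A : WeakLie3 k L) (B : WeakLie3 k M) (f1 : MMap L M 1 0) (f2 : MMap L M 2 1)
    (f21 : MMap L M 2 2) (f3 : MMap L M 3 2) : MMap L M 3 2 :=
  (⅟ (2 : k) * ⅟ (3 : k)) • ∑ σ : Equiv.Perm (Fin 3), (Equiv.Perm.sign σ : ℤ) • pa σ f3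
  - (⅟ (2 : k) * ⅟ (2 : k) * ⅟ (2 : k) * ⅟ (3 : k)) •
      ∑ σ : Equiv.Perm (Fin 3), (Equiv.Perm.sign σ : ℤ) •
        pa σ (pc 2 0 1 f21 A.l2 + pc 2 1 0 f21 A.l2
          - fc2 2 B.l21 f2 f1 - fc2 2 B.l21 f1 f2)

end Skew

section Comp

variable {k : Type} [CommRing k] {L M N : ℤ → Type}
  [∀ i, AddCommGroup (L i)] [∀ i, Module k (L i)]
  [∀ i, AddCommGroup (M i)] [∀ i, Module k (M i)]
  [∀ i, AddCommGroup (N i)] [∀ i, Module k (N i)]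

/-- First component of the composition of weak morphisms. -/
def cmp1 (f1' : MMap M N 1 0) (f1 : MMap L M 1 0) : MMap L N 1 0 := fc1 0 f1' f1

/-- Second component of the composition of weak morphisms. -/
def cmp2 (f1' : MMap M N 1 0) (f2' : MMap M N 2 1) (f1 : MMap L M 1 0) (f2 : MMap L M 2 1) :
    MMap L N 2 1 := fc2 1 f2' f1 f1 + fc1 1 f1' f2

/-- `(f'∘f)21` component of the composition of weak morphisms. -/
def cmp21 (f1' : MMap M N 1 0) (f21' : MMap M N 2 2) (f1 : MMap L M 1 0)
    (f21 : MMap L M 2 2) : MMap L N 2 2 := fc2 2 f21' f1 f1 + fc1 2 f1' f21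

/-- Third component of the composition of weak morphisms. -/
def cmp3 (f1' : MMap M N 1 0) (f2' : MMap M N 2 1) (f3' : MMap M N 3 2)
    (f1 : MMap L M 1 0) (f2 : MMap L M 2 1) (f3 : MMap L M 3 2) : MMap L N 3 2 :=
  fc3 2 f3' f1 f1 f1 - fc2 2 f2' f2 f1 + fc2 2 f2' f1 f2 - pa (P12 3) (fc2 2 f2' f1 f2)
    + fc1 2 f1' f3

end Comp

end WL3
namespace WL3

section Evaluation

variable {L M N : ℤ → Type} [∀ i, AddCommGroup (L i)] [∀ i, AddCommGroup (M i)]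
  [∀ i, AddCommGroup (N i)]

/-- The family concentrated in degree `n` with value `x`. -/
def el {n : ℤ} (x : M n) : ∀ j, M j := Pi.single n x

theorem el_self {n : ℤ} (x : M n) : el x n = x := Pi.single_eq_same n x

theorem el_injective {n : ℤ} : Function.Injective (el : M n → ∀ j, M j) :=
  Pi.single_injective (M := M) n

theorem el_gcast {i j : ℤ} (h : i = j) (x : M i) : el (gcast h x) = el x := by
  subst h; rfl

theorem el_zero {n : ℤ} : el (0 : M n) = 0 := Pi.single_zero n
theorem el_add {n : ℤ} (x y : M n) : el (x + y) = el x + el y := Pi.single_add n x y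
theorem el_sub {n : ℤ} (x y : M n) : el (x - y) = el x - el y := Pi.single_sub n x y
theorem el_neg {n : ℤ} (x : M n) : el (-x) = -el x := Pi.single_neg n x
theorem el_zsmul {n : ℤ} (c : ℤ) (x : M n) : el (c • x) = c • el x := Pi.single_smul (f := M) n c x
theorem el_smul {k : Type} [CommRing k] [∀ i, Module k (M i)] {n : ℤ} (c : k) (x : M n) :
    el (c • x) = c • el x := Pi.single_smul (f := M) n c x

/-- Evaluation of the component of `μ` at degrees `d` on the degree-`d j` parts of the
families `X j`. Values lie in a type not depending on `d`, so that no casts are needed. -/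
def S {m : ℕ} {r : ℤ} (μ : MMap L M m r) (d : Fin m → ℤ) (X : Fin m → ∀ j, L j) :
    ∀ j, M j := el (μ d fun j => X j (d j))

theorem S_el {m : ℕ} {r : ℤ} (μ : MMap L M m r) (d : Fin m → ℤ) (x : ∀ j, L (d j)) :
    S μ d (fun j => el (x j)) = el (μ d x) := by
  simp only [S, el_self]

theorem MMap.ext_S {m : ℕ} {r : ℤ} {μ ν : MMap L M m r} (h : ∀ d X, S μ d X = S ν d X) :
    μ = ν := by
  funext d x
  apply el_injective
  rw [← S_el, ← S_el, h]

theorem el_S {m : ℕ} {r : ℤ} (μ : MMap L M m r) (d : Fin m → ℤ) (X : Fin m → ∀ j, L j) (n : ℤ)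
    (hn : r + ∑ j, d j = n) : el (S μ d X n) = S μ d X := by
  subst hn; rw [S, el_self]

theorem el_eq_S {m : ℕ} {r : ℤ} (μ : MMap L M m r) {d : Fin m → ℤ} {y : ∀ j, L (d j)}
    {Y : Fin m → ∀ j, L j} (h : ∀ j, el (y j) = el (Y j (d j))) : el (μ d y) = S μ d Y := by
  rw [S, show y = fun j => Y j (d j) from funext fun j => el_injective (h j)]

theorem el_gcast_eq {m : ℕ} {r n n' : ℤ} (μ : MMap L M m r) (d : Fin m → ℤ)
    (X : Fin m → ∀ j, L j) (h : r + ∑ j, d j = n) (hn : r + ∑ j, d j = n') :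
    el (gcast h (μ d fun j => X j (d j))) = el (S μ d X n') := by
  rw [el_gcast, el_S _ _ _ _ hn, S]

theorem S_mcast {m : ℕ} {r r' : ℤ} (hr : r = r') (μ : MMap L M m r) (d : Fin m → ℤ)
    (X : Fin m → ∀ j, L j) : S (mcast rfl hr μ) d X = S μ d X := by
  subst hr; rfl

theorem S_zero {m : ℕ} {r : ℤ} (d : Fin m → ℤ) (X : Fin m → ∀ j, L j) :
    S (0 : MMap L M m r) d X = 0 := el_zero
theorem S_add {m : ℕ} {r : ℤ} (μ ν : MMap L M m r) (d : Fin m → ℤ) (X : Fin m → ∀ j, L j) :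
    S (μ + ν) d X = S μ d X + S ν d X := el_add _ _
theorem S_sub {m : ℕ} {r : ℤ} (μ ν : MMap L M m r) (d : Fin m → ℤ) (X : Fin m → ∀ j, L j) :
    S (μ - ν) d X = S μ d X - S ν d X := el_sub _ _
theorem S_neg {m : ℕ} {r : ℤ} (μ : MMap L M m r) (d : Fin m → ℤ) (X : Fin m → ∀ j, L j) :
    S (-μ) d X = -S μ d X := el_neg _
theorem S_zsmul {m : ℕ} {r : ℤ} (c : ℤ) (μ : MMap L M m r) (d : Fin m → ℤ)
    (X : Fin m → ∀ j, L j) : S (c • μ) d X = c • S μ d X := el_zsmul _ _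
theorem S_pa {m : ℕ} {r : ℤ} (σ : Equiv.Perm (Fin m)) (μ : MMap L M m r) (d : Fin m → ℤ)
    (X : Fin m → ∀ j, L j) :
    S (pa σ μ) d X = koszulSign d σ • S μ (fun j => d (σ.symm j)) (fun j => X (σ.symm j)) := by
  simp only [S, pa, el_zsmul, el_gcast]

theorem S_pcomp (m₁ m₂ : ℕ) {n : ℕ} {r s : ℤ} (μ : MMap L M (m₁ + 1 + m₂) r)
    (ν : MMap L L n s) (d : Fin (m₁ + n + m₂) → ℤ) (X : Fin (m₁ + n + m₂) → ∀ j, L j) :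
    S (pcomp m₁ m₂ μ ν) d X =
      ((-1 : ℤ) ^ (s * ∑ j : Fin m₁, d (Fin.castAdd m₂ (Fin.castAdd n j))).natAbs) •
      S μ (outDeg m₁ m₂ n s d)
        (Fin.append (Fin.append (fun j => X (Fin.castAdd m₂ (Fin.castAdd n j)))
          (fun _ : Fin 1 => S ν (fun j => d (Fin.castAdd m₂ (Fin.natAdd m₁ j)))
            (fun j => X (Fin.castAdd m₂ (Fin.natAdd m₁ j)))))
          (fun j => X (Fin.natAdd (m₁ + n) j))) := by
  rw [S, pcomp, el_zsmul, el_gcast]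
  congr 1
  refine el_eq_S μ fun j => ?_
  refine Fin.addCases (fun j => ?_) (fun j => ?_) j
  · refine Fin.addCases (fun j => ?_) (fun j => ?_) j
    · simp only [Fin.addCases_left, el_gcast, Fin.append_left]
      rw [outDeg_left]
    · simp only [Fin.addCases_left, Fin.addCases_right, el_gcast, Fin.append_left,
        Fin.append_right]
      rw [outDeg_mid, el_S _ _ _ _ rfl, S]
  · simp only [Fin.addCases_right, el_gcast, Fin.append_right]
    rw [outDeg_right]

theorem S_comp₁ {a : ℕ} {r s : ℤ} (μ : MMap M N 1 r) (g : MMap L M a s) (d : Fin a → ℤ)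
    (X : Fin a → ∀ j, L j) : S (comp₁ μ g) d X = S μ ![s + ∑ j, d j] ![S g d X] := by
  rw [S, comp₁, el_gcast]
  have : (fun _ : Fin 1 => s + ∑ j, d j) = ![s + ∑ j, d j] := by
    funext j; fin_cases j; rfl
  rw [← this]
  refine el_eq_S μ fun j => ?_
  fin_cases j
  exact (el_S g d X _ rfl).symm

theorem S_comp₂ {a b : ℕ} {r s₁ s₂ : ℤ} (μ : MMap M N 2 r) (g₁ : MMap L M a s₁)
    (g₂ : MMap L M b s₂) (d : Fin (a + b) → ℤ) (X : Fin (a + b) → ∀ j, L j) :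
    S (comp₂ μ g₁ g₂) d X =
      ((-1 : ℤ) ^ (s₂ * ∑ j : Fin a, d (Fin.castAdd b j)).natAbs) •
      S μ ![s₁ + ∑ j : Fin a, d (Fin.castAdd b j), s₂ + ∑ j : Fin b, d (Fin.natAdd a j)]
        ![S g₁ (fun j => d (Fin.castAdd b j)) (fun j => X (Fin.castAdd b j)),
          S g₂ (fun j => d (Fin.natAdd a j)) (fun j => X (Fin.natAdd a j))] := by
  rw [S, comp₂, el_zsmul, el_gcast]
  congr 1
  refine el_eq_S μ fun j => ?_
  fin_cases j
  · exact el_gcast_eq g₁ (fun _ => d _) (fun _ => X _) rfl rfl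
  · exact el_gcast_eq g₂ (fun _ => d _) (fun _ => X _) rfl rfl

theorem S_comp₃ {a b c : ℕ} {r s₁ s₂ s₃ : ℤ}
    (μ : MMap M N 3 r) (g₁ : MMap L M a s₁) (g₂ : MMap L M b s₂) (g₃ : MMap L M c s₃)
    (d : Fin (a + b + c) → ℤ) (X : Fin (a + b + c) → ∀ j, L j) :
    S (comp₃ μ g₁ g₂ g₃) d X =
      ((-1 : ℤ) ^ (s₂ * (∑ j : Fin a, d (Fin.castAdd c (Fin.castAdd b j)))
        + s₃ * ((∑ j : Fin a, d (Fin.castAdd c (Fin.castAdd b j)))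
          + ∑ j : Fin b, d (Fin.castAdd c (Fin.natAdd a j)))).natAbs) •
      S μ ![s₁ + ∑ j : Fin a, d (Fin.castAdd c (Fin.castAdd b j)),
            s₂ + ∑ j : Fin b, d (Fin.castAdd c (Fin.natAdd a j)),
            s₃ + ∑ j : Fin c, d (Fin.natAdd (a + b) j)]
        ![S g₁ (fun j => d (Fin.castAdd c (Fin.castAdd b j)))
            (fun j => X (Fin.castAdd c (Fin.castAdd b j))),
          S g₂ (fun j => d (Fin.castAdd c (Fin.natAdd a j)))
            (fun j => X (Fin.castAdd c (Fin.natAdd a j))),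
          S g₃ (fun j => d (Fin.natAdd (a + b) j)) (fun j => X (Fin.natAdd (a + b) j))] := by
  rw [S, comp₃, el_zsmul, el_gcast]
  congr 1
  refine el_eq_S μ fun j => ?_
  fin_cases j
  · exact el_gcast_eq g₁ (fun _ => d _) (fun _ => X _) rfl rfl
  · exact el_gcast_eq g₂ (fun _ => d _) (fun _ => X _) rfl rfl
  · exact el_gcast_eq g₃ (fun _ => d _) (fun _ => X _) rfl rfl

theorem S_comp₄ {a b c e : ℕ} {r s₁ s₂ s₃ s₄ : ℤ}
    (μ : MMap M N 4 r) (g₁ : MMap L M a s₁) (g₂ : MMap L M b s₂) (g₃ : MMap L M c s₃)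
    (g₄ : MMap L M e s₄) (d : Fin (a + b + c + e) → ℤ) (X : Fin (a + b + c + e) → ∀ j, L j) :
    S (comp₄ μ g₁ g₂ g₃ g₄) d X =
      ((-1 : ℤ) ^ (s₂ * (∑ j : Fin a, d (Fin.castAdd e (Fin.castAdd c (Fin.castAdd b j))))
        + s₃ * ((∑ j : Fin a, d (Fin.castAdd e (Fin.castAdd c (Fin.castAdd b j))))
          + ∑ j : Fin b, d (Fin.castAdd e (Fin.castAdd c (Fin.natAdd a j))))
        + s₄ * ((∑ j : Fin a, d (Fin.castAdd e (Fin.castAdd c (Fin.castAdd b j))))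
          + (∑ j : Fin b, d (Fin.castAdd e (Fin.castAdd c (Fin.natAdd a j))))
          + ∑ j : Fin c, d (Fin.castAdd e (Fin.natAdd (a + b) j)))).natAbs) •
      S μ ![s₁ + ∑ j : Fin a, d (Fin.castAdd e (Fin.castAdd c (Fin.castAdd b j))),
            s₂ + ∑ j : Fin b, d (Fin.castAdd e (Fin.castAdd c (Fin.natAdd a j))),
            s₃ + ∑ j : Fin c, d (Fin.castAdd e (Fin.natAdd (a + b) j)),
            s₄ + ∑ j : Fin e, d (Fin.natAdd (a + b + c) j)]
        ![S g₁ (fun j => d (Fin.castAdd e (Fin.castAdd c (Fin.castAdd b j))))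
            (fun j => X (Fin.castAdd e (Fin.castAdd c (Fin.castAdd b j)))),
          S g₂ (fun j => d (Fin.castAdd e (Fin.castAdd c (Fin.natAdd a j))))
            (fun j => X (Fin.castAdd e (Fin.castAdd c (Fin.natAdd a j)))),
          S g₃ (fun j => d (Fin.castAdd e (Fin.natAdd (a + b) j)))
            (fun j => X (Fin.castAdd e (Fin.natAdd (a + b) j))),
          S g₄ (fun j => d (Fin.natAdd (a + b + c) j))
            (fun j => X (Fin.natAdd (a + b + c) j))] := by
  rw [S, comp₄, el_zsmul, el_gcast]
  congr 1
  refine el_eq_S μ fun j => ?_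
  fin_cases j
  · exact el_gcast_eq g₁ (fun _ => d _) (fun _ => X _) rfl rfl
  · exact el_gcast_eq g₂ (fun _ => d _) (fun _ => X _) rfl rfl
  · exact el_gcast_eq g₃ (fun _ => d _) (fun _ => X _) rfl rfl
  · exact el_gcast_eq g₄ (fun _ => d _) (fun _ => X _) rfl rfl

theorem S_idm (a : ℤ) (X : ∀ j, L j) : S (idm : MMap L L 1 0) ![a] ![X] = el (X a) :=
  el_gcast _ _

end Evaluation

section Vectors

variable {L M N : ℤ → Type} [∀ i, AddCommGroup (L i)] [∀ i, AddCommGroup (M i)]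
  [∀ i, AddCommGroup (N i)]

theorem S_fc1 {R : ℤ} {m : ℕ} {r s : ℤ} (μ : MMap M N 1 r) (g : MMap L M m s) (h : r + s = R)
    (d : Fin m → ℤ) (X : Fin m → ∀ j, L j) :
    S (fc1 R μ g h) d X = S μ ![s + ∑ j, d j] ![S g d X] := by
  rw [fc1, S_mcast, S_comp₁]

theorem S_pc_append {m₁ m₂ n : ℕ} {R r s : ℤ} (μ : MMap L M (m₁ + 1 + m₂) r)
    (ν : MMap L L n s) (h : r + s = R) (d₁ : Fin m₁ → ℤ) (d₂ : Fin n → ℤ) (d₃ : Fin m₂ → ℤ)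
    (X₁ : Fin m₁ → ∀ j, L j) (X₂ : Fin n → ∀ j, L j) (X₃ : Fin m₂ → ∀ j, L j) :
    S (pc R m₁ m₂ μ ν h) (Fin.append (Fin.append d₁ d₂) d₃)
        (Fin.append (Fin.append X₁ X₂) X₃) =
      (-1 : ℤ) ^ (s * ∑ j, d₁ j).natAbs •
        S μ (Fin.append (Fin.append d₁ ![s + ∑ j, d₂ j]) d₃)
          (Fin.append (Fin.append X₁ ![S ν d₂ X₂]) X₃) := by
  rw [pc, S_mcast, S_pcomp]
  have hv {α : Type} (x : α) : (fun _ : Fin 1 => x) = ![x] := by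
    funext j; fin_cases j; rfl
  simp only [outDeg, Fin.append_left, Fin.append_right, hv]

theorem S_fc2_append {m₁ m₂ : ℕ} {R r s₁ s₂ : ℤ} (μ : MMap M N 2 r) (f : MMap L M m₁ s₁)
    (g : MMap L M m₂ s₂) (h : r + (s₁ + s₂) = R) (d₁ : Fin m₁ → ℤ) (d₂ : Fin m₂ → ℤ)
    (X₁ : Fin m₁ → ∀ j, L j) (X₂ : Fin m₂ → ∀ j, L j) :
    S (fc2 R μ f g h) (Fin.append d₁ d₂) (Fin.append X₁ X₂) =
      (-1 : ℤ) ^ (s₂ * ∑ j, d₁ j).natAbs •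
        S μ ![s₁ + ∑ j, d₁ j, s₂ + ∑ j, d₂ j] ![S f d₁ X₁, S g d₂ X₂] := by
  rw [fc2, S_mcast, S_comp₂]
  simp only [Fin.append_left, Fin.append_right]

theorem S_fc3_append {m₁ m₂ m₃ : ℕ} {R r s₁ s₂ s₃ : ℤ} (μ : MMap M N 3 r)
    (f : MMap L M m₁ s₁) (g : MMap L M m₂ s₂) (e : MMap L M m₃ s₃)
    (h : r + (s₁ + s₂ + s₃) = R) (d₁ : Fin m₁ → ℤ) (d₂ : Fin m₂ → ℤ) (d₃ : Fin m₃ → ℤ)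
    (X₁ : Fin m₁ → ∀ j, L j) (X₂ : Fin m₂ → ∀ j, L j) (X₃ : Fin m₃ → ∀ j, L j) :
    S (fc3 R μ f g e h) (Fin.append (Fin.append d₁ d₂) d₃)
        (Fin.append (Fin.append X₁ X₂) X₃) =
      (-1 : ℤ) ^ (s₂ * ∑ j, d₁ j + s₃ * (∑ j, d₁ j + ∑ j, d₂ j)).natAbs •
        S μ ![s₁ + ∑ j, d₁ j, s₂ + ∑ j, d₂ j, s₃ + ∑ j, d₃ j]
          ![S f d₁ X₁, S g d₂ X₂, S e d₃ X₃] := by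
  rw [fc3, S_mcast, S_comp₃]
  simp only [Fin.append_left, Fin.append_right]

theorem S_fc4_append {m₁ m₂ m₃ m₄ : ℕ} {R r s₁ s₂ s₃ s₄ : ℤ} (μ : MMap M N 4 r)
    (f : MMap L M m₁ s₁) (g : MMap L M m₂ s₂) (e : MMap L M m₃ s₃) (t : MMap L M m₄ s₄)
    (h : r + (s₁ + s₂ + s₃ + s₄) = R) (d₁ : Fin m₁ → ℤ) (d₂ : Fin m₂ → ℤ) (d₃ : Fin m₃ → ℤ)
    (d₄ : Fin m₄ → ℤ) (X₁ : Fin m₁ → ∀ j, L j) (X₂ : Fin m₂ → ∀ j, L j)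
    (X₃ : Fin m₃ → ∀ j, L j) (X₄ : Fin m₄ → ∀ j, L j) :
    S (fc4 R μ f g e t h) (Fin.append (Fin.append (Fin.append d₁ d₂) d₃) d₄)
        (Fin.append (Fin.append (Fin.append X₁ X₂) X₃) X₄) =
      (-1 : ℤ) ^ (s₂ * ∑ j, d₁ j + s₃ * (∑ j, d₁ j + ∑ j, d₂ j)
          + s₄ * (∑ j, d₁ j + ∑ j, d₂ j + ∑ j, d₃ j)).natAbs •
        S μ ![s₁ + ∑ j, d₁ j, s₂ + ∑ j, d₂ j, s₃ + ∑ j, d₃ j, s₄ + ∑ j, d₄ j]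
          ![S f d₁ X₁, S g d₂ X₂, S e d₃ X₃, S t d₄ X₄] := by
  rw [fc4, S_mcast, S_comp₄]
  simp only [Fin.append_left, Fin.append_right]

/-! ### Appending explicit tuples -/

section
variable {α : Type} (a b c e : α)

@[simp]
theorem append_nil {n : ℕ} (v : Fin n → α) : Fin.append v ![] = v := by
  rw [Subsingleton.elim ![] Fin.elim0, Fin.append_elim0]; rfl
@[simp]
theorem nil_append_one : Fin.append ![] ![a] = ![a] := by funext j; fin_cases j; rfl
@[simp]
theorem nil_append_two : Fin.append ![] ![a, b] = ![a, b] := by funext j; fin_cases j <;> rfl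
@[simp]
theorem nil_append_three : Fin.append ![] ![a, b, c] = ![a, b, c] := by
  funext j; fin_cases j <;> rfl
@[simp]
theorem one_append_one : Fin.append ![a] ![b] = ![a, b] := by funext j; fin_cases j <;> rfl
@[simp]
theorem one_append_two : Fin.append ![a] ![b, c] = ![a, b, c] := by
  funext j; fin_cases j <;> rfl
@[simp]
theorem two_append_one : Fin.append ![a, b] ![c] = ![a, b, c] := by
  funext j; fin_cases j <;> rfl
@[simp]
theorem one_append_three : Fin.append ![a] ![b, c, e] = ![a, b, c, e] := by
  funext j; fin_cases j <;> rfl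
@[simp]
theorem two_append_two : Fin.append ![a, b] ![c, e] = ![a, b, c, e] := by
  funext j; fin_cases j <;> rfl
@[simp]
theorem three_append_one : Fin.append ![a, b, c] ![e] = ![a, b, c, e] := by
  funext j; fin_cases j <;> rfl
end

/-! ### Compositions evaluated on explicit tuples -/

section
variable {R r s s₁ s₂ s₃ s₄ : ℤ} (a b c e : ℤ) (X Y Z W : ∀ j, L j)

theorem S_pc_0_1_0 (μ : MMap L M 1 r) (ν : MMap L L 1 s) (h : r + s = R) :
    S (m := 1) (pc R 0 0 μ ν h) ![a] ![X] = S μ ![s + a] ![S ν ![a] ![X]] := by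
  have := S_pc_append (m₁ := 0) (m₂ := 0) μ ν h ![] ![a] ![] ![] ![X] ![]
  simpa [Fin.sum_univ_three] using this

theorem S_pc_0_1_1 (μ : MMap L M 2 r) (ν : MMap L L 1 s) (h : r + s = R) :
    S (m := 2) (pc R 0 1 μ ν h) ![a, b] ![X, Y] =
      S μ ![s + a, b] ![S ν ![a] ![X], Y] := by
  have := S_pc_append (m₁ := 0) (m₂ := 1) μ ν h ![] ![a] ![b] ![] ![X] ![Y]
  simpa [Fin.sum_univ_three] using this

theorem S_pc_1_1_0 (μ : MMap L M 2 r) (ν : MMap L L 1 s) (h : r + s = R) :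
    S (m := 2) (pc R 1 0 μ ν h) ![a, b] ![X, Y] =
      (-1 : ℤ) ^ (s * a).natAbs • S μ ![a, s + b] ![X, S ν ![b] ![Y]] := by
  have := S_pc_append (m₁ := 1) (m₂ := 0) μ ν h ![a] ![b] ![] ![X] ![Y] ![]
  simpa [Fin.sum_univ_three] using this

theorem S_pc_0_1_2 (μ : MMap L M 3 r) (ν : MMap L L 1 s) (h : r + s = R) :
    S (m := 3) (pc R 0 2 μ ν h) ![a, b, c] ![X, Y, Z] =
      S μ ![s + a, b, c] ![S ν ![a] ![X], Y, Z] := by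
  have := S_pc_append (m₁ := 0) (m₂ := 2) μ ν h ![] ![a] ![b, c] ![] ![X] ![Y, Z]
  simpa [Fin.sum_univ_three] using this

theorem S_pc_1_1_1 (μ : MMap L M 3 r) (ν : MMap L L 1 s) (h : r + s = R) :
    S (m := 3) (pc R 1 1 μ ν h) ![a, b, c] ![X, Y, Z] =
      (-1 : ℤ) ^ (s * a).natAbs • S μ ![a, s + b, c] ![X, S ν ![b] ![Y], Z] := by
  have := S_pc_append (m₁ := 1) (m₂ := 1) μ ν h ![a] ![b] ![c] ![X] ![Y] ![Z]
  simpa [Fin.sum_univ_three] using this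

theorem S_pc_2_1_0 (μ : MMap L M 3 r) (ν : MMap L L 1 s) (h : r + s = R) :
    S (m := 3) (pc R 2 0 μ ν h) ![a, b, c] ![X, Y, Z] =
      (-1 : ℤ) ^ (s * (a + b)).natAbs • S μ ![a, b, s + c] ![X, Y, S ν ![c] ![Z]] := by
  have := S_pc_append (m₁ := 2) (m₂ := 0) μ ν h ![a, b] ![c] ![] ![X, Y] ![Z] ![]
  simpa [Fin.sum_univ_three] using this

theorem S_pc_0_1_3 (μ : MMap L M 4 r) (ν : MMap L L 1 s) (h : r + s = R) :
    S (m := 4) (pc R 0 3 μ ν h) ![a, b, c, e] ![X, Y, Z, W] =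
      S μ ![s + a, b, c, e] ![S ν ![a] ![X], Y, Z, W] := by
  have := S_pc_append (m₁ := 0) (m₂ := 3) μ ν h ![] ![a] ![b, c, e] ![] ![X] ![Y, Z, W]
  simpa [Fin.sum_univ_three] using this

theorem S_pc_1_1_2 (μ : MMap L M 4 r) (ν : MMap L L 1 s) (h : r + s = R) :
    S (m := 4) (pc R 1 2 μ ν h) ![a, b, c, e] ![X, Y, Z, W] =
      (-1 : ℤ) ^ (s * a).natAbs • S μ ![a, s + b, c, e] ![X, S ν ![b] ![Y], Z, W] := by
  have := S_pc_append (m₁ := 1) (m₂ := 2) μ ν h ![a] ![b] ![c, e] ![X] ![Y] ![Z, W]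
  simpa [Fin.sum_univ_three] using this

theorem S_pc_2_1_1 (μ : MMap L M 4 r) (ν : MMap L L 1 s) (h : r + s = R) :
    S (m := 4) (pc R 2 1 μ ν h) ![a, b, c, e] ![X, Y, Z, W] =
      (-1 : ℤ) ^ (s * (a + b)).natAbs • S μ ![a, b, s + c, e] ![X, Y, S ν ![c] ![Z], W] := by
  have := S_pc_append (m₁ := 2) (m₂ := 1) μ ν h ![a, b] ![c] ![e] ![X, Y] ![Z] ![W]
  simpa [Fin.sum_univ_three] using this

theorem S_pc_3_1_0 (μ : MMap L M 4 r) (ν : MMap L L 1 s) (h : r + s = R) :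
    S (m := 4) (pc R 3 0 μ ν h) ![a, b, c, e] ![X, Y, Z, W] =
      (-1 : ℤ) ^ (s * (a + b + c)).natAbs • S μ ![a, b, c, s + e] ![X, Y, Z, S ν ![e] ![W]] := by
  have := S_pc_append (m₁ := 3) (m₂ := 0) μ ν h ![a, b, c] ![e] ![] ![X, Y, Z] ![W] ![]
  simpa [Fin.sum_univ_three] using this

theorem S_pc_0_2_1 (μ : MMap L M 2 r) (ν : MMap L L 2 s) (h : r + s = R) :
    S (m := 3) (pc R 0 1 μ ν h) ![a, b, c] ![X, Y, Z] =
      S μ ![s + (a + b), c] ![S ν ![a, b] ![X, Y], Z] := by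
  have := S_pc_append (m₁ := 0) (m₂ := 1) μ ν h ![] ![a, b] ![c] ![] ![X, Y] ![Z]
  simpa [Fin.sum_univ_three] using this

theorem S_pc_1_2_0 (μ : MMap L M 2 r) (ν : MMap L L 2 s) (h : r + s = R) :
    S (m := 3) (pc R 1 0 μ ν h) ![a, b, c] ![X, Y, Z] =
      (-1 : ℤ) ^ (s * a).natAbs • S μ ![a, s + (b + c)] ![X, S ν ![b, c] ![Y, Z]] := by
  have := S_pc_append (m₁ := 1) (m₂ := 0) μ ν h ![a] ![b, c] ![] ![X] ![Y, Z] ![]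
  simpa [Fin.sum_univ_three] using this

theorem S_pc_0_3_1 (μ : MMap L M 2 r) (ν : MMap L L 3 s) (h : r + s = R) :
    S (m := 4) (pc R 0 1 μ ν h) ![a, b, c, e] ![X, Y, Z, W] =
      S μ ![s + (a + b + c), e] ![S ν ![a, b, c] ![X, Y, Z], W] := by
  have := S_pc_append (m₁ := 0) (m₂ := 1) μ ν h ![] ![a, b, c] ![e] ![] ![X, Y, Z] ![W]
  simpa [Fin.sum_univ_three] using this

theorem S_pc_1_3_0 (μ : MMap L M 2 r) (ν : MMap L L 3 s) (h : r + s = R) :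
    S (m := 4) (pc R 1 0 μ ν h) ![a, b, c, e] ![X, Y, Z, W] =
      (-1 : ℤ) ^ (s * a).natAbs • S μ ![a, s + (b + c + e)] ![X, S ν ![b, c, e] ![Y, Z, W]] := by
  have := S_pc_append (m₁ := 1) (m₂ := 0) μ ν h ![a] ![b, c, e] ![] ![X] ![Y, Z, W] ![]
  simpa [Fin.sum_univ_three] using this

theorem S_pc_0_2_2 (μ : MMap L M 3 r) (ν : MMap L L 2 s) (h : r + s = R) :
    S (m := 4) (pc R 0 2 μ ν h) ![a, b, c, e] ![X, Y, Z, W] =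
      S μ ![s + (a + b), c, e] ![S ν ![a, b] ![X, Y], Z, W] := by
  have := S_pc_append (m₁ := 0) (m₂ := 2) μ ν h ![] ![a, b] ![c, e] ![] ![X, Y] ![Z, W]
  simpa [Fin.sum_univ_three] using this

theorem S_pc_1_2_1 (μ : MMap L M 3 r) (ν : MMap L L 2 s) (h : r + s = R) :
    S (m := 4) (pc R 1 1 μ ν h) ![a, b, c, e] ![X, Y, Z, W] =
      (-1 : ℤ) ^ (s * a).natAbs • S μ ![a, s + (b + c), e] ![X, S ν ![b, c] ![Y, Z], W] := by
  have := S_pc_append (m₁ := 1) (m₂ := 1) μ ν h ![a] ![b, c] ![e] ![X] ![Y, Z] ![W]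
  simpa [Fin.sum_univ_three] using this

theorem S_pc_2_2_0 (μ : MMap L M 3 r) (ν : MMap L L 2 s) (h : r + s = R) :
    S (m := 4) (pc R 2 0 μ ν h) ![a, b, c, e] ![X, Y, Z, W] =
      (-1 : ℤ) ^ (s * (a + b)).natAbs • S μ ![a, b, s + (c + e)] ![X, Y, S ν ![c, e] ![Z, W]] := by
  have := S_pc_append (m₁ := 2) (m₂ := 0) μ ν h ![a, b] ![c, e] ![] ![X, Y] ![Z, W] ![]
  simpa [Fin.sum_univ_three] using this

theorem S_fc2_1_1 (μ : MMap M N 2 r) (f : MMap L M 1 s₁) (g : MMap L M 1 s₂)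
    (h : r + (s₁ + s₂) = R) :
    S (m := 2) (fc2 R μ f g h) ![a, b] ![X, Y] =
      (-1 : ℤ) ^ (s₂ * a).natAbs •
        S μ ![s₁ + a, s₂ + b]
          ![S f ![a] ![X], S g ![b] ![Y]] := by
  have := S_fc2_append μ f g h ![a] ![b] ![X] ![Y]
  simpa [Fin.sum_univ_three] using this

theorem S_fc2_1_2 (μ : MMap M N 2 r) (f : MMap L M 1 s₁) (g : MMap L M 2 s₂)
    (h : r + (s₁ + s₂) = R) :
    S (m := 3) (fc2 R μ f g h) ![a, b, c] ![X, Y, Z] =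
      (-1 : ℤ) ^ (s₂ * a).natAbs •
        S μ ![s₁ + a, s₂ + (b + c)]
          ![S f ![a] ![X], S g ![b, c] ![Y, Z]] := by
  have := S_fc2_append μ f g h ![a] ![b, c] ![X] ![Y, Z]
  simpa [Fin.sum_univ_three] using this

theorem S_fc2_2_1 (μ : MMap M N 2 r) (f : MMap L M 2 s₁) (g : MMap L M 1 s₂)
    (h : r + (s₁ + s₂) = R) :
    S (m := 3) (fc2 R μ f g h) ![a, b, c] ![X, Y, Z] =
      (-1 : ℤ) ^ (s₂ * (a + b)).natAbs •
        S μ ![s₁ + (a + b), s₂ + c]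
          ![S f ![a, b] ![X, Y], S g ![c] ![Z]] := by
  have := S_fc2_append μ f g h ![a, b] ![c] ![X, Y] ![Z]
  simpa [Fin.sum_univ_three] using this

theorem S_fc2_1_3 (μ : MMap M N 2 r) (f : MMap L M 1 s₁) (g : MMap L M 3 s₂)
    (h : r + (s₁ + s₂) = R) :
    S (m := 4) (fc2 R μ f g h) ![a, b, c, e] ![X, Y, Z, W] =
      (-1 : ℤ) ^ (s₂ * a).natAbs •
        S μ ![s₁ + a, s₂ + (b + c + e)]
          ![S f ![a] ![X], S g ![b, c, e] ![Y, Z, W]] := by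
  have := S_fc2_append μ f g h ![a] ![b, c, e] ![X] ![Y, Z, W]
  simpa [Fin.sum_univ_three] using this

theorem S_fc2_3_1 (μ : MMap M N 2 r) (f : MMap L M 3 s₁) (g : MMap L M 1 s₂)
    (h : r + (s₁ + s₂) = R) :
    S (m := 4) (fc2 R μ f g h) ![a, b, c, e] ![X, Y, Z, W] =
      (-1 : ℤ) ^ (s₂ * (a + b + c)).natAbs •
        S μ ![s₁ + (a + b + c), s₂ + e]
          ![S f ![a, b, c] ![X, Y, Z], S g ![e] ![W]] := by
  have := S_fc2_append μ f g h ![a, b, c] ![e] ![X, Y, Z] ![W]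
  simpa [Fin.sum_univ_three] using this

theorem S_fc2_2_2 (μ : MMap M N 2 r) (f : MMap L M 2 s₁) (g : MMap L M 2 s₂)
    (h : r + (s₁ + s₂) = R) :
    S (m := 4) (fc2 R μ f g h) ![a, b, c, e] ![X, Y, Z, W] =
      (-1 : ℤ) ^ (s₂ * (a + b)).natAbs •
        S μ ![s₁ + (a + b), s₂ + (c + e)]
          ![S f ![a, b] ![X, Y], S g ![c, e] ![Z, W]] := by
  have := S_fc2_append μ f g h ![a, b] ![c, e] ![X, Y] ![Z, W]
  simpa [Fin.sum_univ_three] using this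

theorem S_fc3_1_1_1 (μ : MMap M N 3 r) (f : MMap L M 1 s₁) (g : MMap L M 1 s₂) (q : MMap L M 1 s₃)
    (h : r + (s₁ + s₂ + s₃) = R) :
    S (m := 3) (fc3 R μ f g q h) ![a, b, c] ![X, Y, Z] =
      (-1 : ℤ) ^ (s₂ * a + s₃ * (a + b)).natAbs •
        S μ ![s₁ + a, s₂ + b, s₃ + c]
          ![S f ![a] ![X], S g ![b] ![Y], S q ![c] ![Z]] := by
  have := S_fc3_append μ f g q h ![a] ![b] ![c] ![X] ![Y] ![Z]
  simpa [Fin.sum_univ_three] using this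

theorem S_fc3_2_1_1 (μ : MMap M N 3 r) (f : MMap L M 2 s₁) (g : MMap L M 1 s₂) (q : MMap L M 1 s₃)
    (h : r + (s₁ + s₂ + s₃) = R) :
    S (m := 4) (fc3 R μ f g q h) ![a, b, c, e] ![X, Y, Z, W] =
      (-1 : ℤ) ^ (s₂ * (a + b) + s₃ * ((a + b) + c)).natAbs •
        S μ ![s₁ + (a + b), s₂ + c, s₃ + e]
          ![S f ![a, b] ![X, Y], S g ![c] ![Z], S q ![e] ![W]] := by
  have := S_fc3_append μ f g q h ![a, b] ![c] ![e] ![X, Y] ![Z] ![W]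
  simpa [Fin.sum_univ_three] using this

theorem S_fc3_1_2_1 (μ : MMap M N 3 r) (f : MMap L M 1 s₁) (g : MMap L M 2 s₂) (q : MMap L M 1 s₃)
    (h : r + (s₁ + s₂ + s₃) = R) :
    S (m := 4) (fc3 R μ f g q h) ![a, b, c, e] ![X, Y, Z, W] =
      (-1 : ℤ) ^ (s₂ * a + s₃ * (a + (b + c))).natAbs •
        S μ ![s₁ + a, s₂ + (b + c), s₃ + e]
          ![S f ![a] ![X], S g ![b, c] ![Y, Z], S q ![e] ![W]] := by
  have := S_fc3_append μ f g q h ![a] ![b, c] ![e] ![X] ![Y, Z] ![W]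
  simpa [Fin.sum_univ_three] using this

theorem S_fc3_1_1_2 (μ : MMap M N 3 r) (f : MMap L M 1 s₁) (g : MMap L M 1 s₂) (q : MMap L M 2 s₃)
    (h : r + (s₁ + s₂ + s₃) = R) :
    S (m := 4) (fc3 R μ f g q h) ![a, b, c, e] ![X, Y, Z, W] =
      (-1 : ℤ) ^ (s₂ * a + s₃ * (a + b)).natAbs •
        S μ ![s₁ + a, s₂ + b, s₃ + (c + e)]
          ![S f ![a] ![X], S g ![b] ![Y], S q ![c, e] ![Z, W]] := by
  have := S_fc3_append μ f g q h ![a] ![b] ![c, e] ![X] ![Y] ![Z, W]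
  simpa [Fin.sum_univ_three] using this

theorem S_fc4_1_1_1_1 (μ : MMap M N 4 r) (f : MMap L M 1 s₁) (g : MMap L M 1 s₂)
    (q : MMap L M 1 s₃) (t : MMap L M 1 s₄)
    (h : r + (s₁ + s₂ + s₃ + s₄) = R) :
    S (m := 4) (fc4 R μ f g q t h) ![a, b, c, e] ![X, Y, Z, W] =
      (-1 : ℤ) ^ (s₂ * a + s₃ * (a + b) + s₄ * (a + b + c)).natAbs •
        S μ ![s₁ + a, s₂ + b, s₃ + c, s₄ + e]
          ![S f ![a] ![X], S g ![b] ![Y], S q ![c] ![Z], S t ![e] ![W]] := by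
  have := S_fc4_append μ f g q t h ![a] ![b] ![c] ![e] ![X] ![Y] ![Z] ![W]
  simpa [Fin.sum_univ_three] using this

end

end Vectors

section Permutations

variable {L M : ℤ → Type} [∀ i, AddCommGroup (L i)] [∀ i, AddCommGroup (M i)]

theorem S_pa_P12_two {r : ℤ} (μ : MMap L M 2 r) (a b : ℤ) (X Y : ∀ j, L j) :
    S (pa (P12 2) μ) ![a, b] ![X, Y] = (-1 : ℤ) ^ (a * b).natAbs • S μ ![b, a] ![Y, X] := by
  rw [S_pa]
  congr 1
  · have h : (Finset.univ.filter fun p : Fin 2 × Fin 2 => p.1 < p.2 ∧ P12 2 p.2 < P12 2 p.1) =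
      {(0, 1)} := by decide
    rw [koszulSign, h, Finset.prod_singleton]
    rfl
  · congr 1 <;> (funext j; fin_cases j <;> rfl)

theorem S_pa_P12_three {r : ℤ} (μ : MMap L M 3 r) (a b c : ℤ) (X Y Z : ∀ j, L j) :
    S (pa (P12 3) μ) ![a, b, c] ![X, Y, Z] =
      (-1 : ℤ) ^ (a * b).natAbs • S μ ![b, a, c] ![Y, X, Z] := by
  rw [S_pa]
  congr 1
  · have h : (Finset.univ.filter fun p : Fin 3 × Fin 3 => p.1 < p.2 ∧ P12 3 p.2 < P12 3 p.1) =
      {(0, 1)} := by decide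
    rw [koszulSign, h, Finset.prod_singleton]
    rfl
  · congr 1 <;> (funext j; fin_cases j <;> rfl)

theorem S_pa_of_zero {m : ℕ} {r : ℤ} (σ : Equiv.Perm (Fin m)) (μ : MMap L M m r)
    {d : Fin m → ℤ} (hd : ∀ j, d j = 0) (X : Fin m → ∀ j, L j) :
    S (pa σ μ) d X = S μ d fun j => X (σ.symm j) := by
  have hk : koszulSign d σ = 1 := by simp [koszulSign, hd]
  rw [S_pa, hk, one_smul]
  congr 1
  funext j
  rw [hd, hd]

theorem S_pa_P23_three_zero {r : ℤ} (μ : MMap L M 3 r) (X Y Z : ∀ j, L j) :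
    S (pa (P23 3) μ) ![0, 0, 0] ![X, Y, Z] = S μ ![0, 0, 0] ![X, Z, Y] := by
  rw [S_pa_of_zero _ _ (by intro j; fin_cases j <;> rfl)]
  congr 1; funext j; fin_cases j <;> rfl

section
variable {r : ℤ} (μ : MMap L M 4 r) (X Y Z W : ∀ j, L j)

theorem S_pa_P12_four_zero :
    S (pa (P12 4) μ) ![0, 0, 0, 0] ![X, Y, Z, W] = S μ ![0, 0, 0, 0] ![Y, X, Z, W] := by
  rw [S_pa_of_zero _ _ (by intro j; fin_cases j <;> rfl)]
  congr 1; funext j; fin_cases j <;> rfl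

theorem S_pa_P23_four_zero :
    S (pa (P23 4) μ) ![0, 0, 0, 0] ![X, Y, Z, W] = S μ ![0, 0, 0, 0] ![X, Z, Y, W] := by
  rw [S_pa_of_zero _ _ (by intro j; fin_cases j <;> rfl)]
  congr 1; funext j; fin_cases j <;> rfl

theorem S_pa_P13_four_zero :
    S (pa (P13 4) μ) ![0, 0, 0, 0] ![X, Y, Z, W] = S μ ![0, 0, 0, 0] ![Z, Y, X, W] := by
  rw [S_pa_of_zero _ _ (by intro j; fin_cases j <;> rfl)]
  congr 1; funext j; fin_cases j <;> rfl

theorem S_pa_P123_four_zero :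
    S (pa (P123 4) μ) ![0, 0, 0, 0] ![X, Y, Z, W] = S μ ![0, 0, 0, 0] ![Z, X, Y, W] := by
  rw [S_pa_of_zero _ _ (by intro j; fin_cases j <;> rfl)]
  congr 1; funext j; fin_cases j <;> rfl

theorem S_pa_P132_four_zero :
    S (pa (P132 4) μ) ![0, 0, 0, 0] ![X, Y, Z, W] = S μ ![0, 0, 0, 0] ![Y, Z, X, W] := by
  rw [S_pa_of_zero _ _ (by intro j; fin_cases j <;> rfl)]
  congr 1; funext j; fin_cases j <;> rfl

end
end Permutations

section Differential

variable {L M : ℤ → Type} [∀ i, AddCommGroup (L i)] [∀ i, AddCommGroup (M i)] {R r : ℤ}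
  (D' : MMap M M 1 (-1)) (D : MMap L L 1 (-1)) (h : -1 + r = R) (h' : r + -1 = R)

theorem bd_one (μ : MMap L M 1 r) :
    bd R D' D μ h = fc1 R D' μ h - (-1 : ℤ) ^ r.natAbs • pc R 0 0 μ D h' := by
  subst h
  rw [bd, bdry, Fin.sum_univ_one]
  rfl

theorem bd_two (μ : MMap L M 2 r) :
    bd R D' D μ h = fc1 R D' μ h -
      (-1 : ℤ) ^ r.natAbs • (pc R 0 1 μ D h' + pc R 1 0 μ D h') := by
  subst h
  rw [bd, bdry, Fin.sum_univ_two]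
  rfl

theorem bd_three (μ : MMap L M 3 r) :
    bd R D' D μ h = fc1 R D' μ h -
      (-1 : ℤ) ^ r.natAbs • (pc R 0 2 μ D h' + pc R 1 1 μ D h' + pc R 2 0 μ D h') := by
  subst h
  rw [bd, bdry, Fin.sum_univ_three]
  rfl

theorem bd_four (μ : MMap L M 4 r) :
    bd R D' D μ h = fc1 R D' μ h -
      (-1 : ℤ) ^ r.natAbs •
        (pc R 0 3 μ D h' + pc R 1 2 μ D h' + pc R 2 1 μ D h' + pc R 3 0 μ D h') := by
  subst h
  rw [bd, bdry, Fin.sum_univ_four]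
  rfl

end Differential

section Linearity

variable {k : Type} [CommRing k] {L M N : ℤ → Type}
  [∀ i, AddCommGroup (L i)] [∀ i, Module k (L i)]
  [∀ i, AddCommGroup (M i)] [∀ i, Module k (M i)]
  [∀ i, AddCommGroup (N i)] [∀ i, Module k (N i)]

/-- Three tuples which agree outside the slot `j`, the `j`-th entry of the third one being
the linear combination `X j + c • Y j`. -/
def LinRel {ι V : Type} [AddCommGroup V] [Module k V] (c : k) (X Y Z : ι → V) (j : ι) : Prop :=
  Z j = X j + c • Y j ∧ ∀ t, t ≠ j → X t = Z t ∧ Y t = Z t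

/-- Multilinearity expressed through the evaluation `S`. -/
theorem isMultilinear_iff {m : ℕ} {r : ℤ} {μ : MMap L M m r} :
    IsMultilinear k μ ↔ ∀ (d : Fin m → ℤ) (X Y Z : Fin m → ∀ n, L n) (j : Fin m) (c : k),
      LinRel c X Y Z j → S μ d Z = S μ d X + c • S μ d Y := by
  constructor
  · rintro hμ d X Y Z j c ⟨hj, hne⟩
    have hX : (fun t => X t (d t)) = Function.update (fun t => Z t (d t)) j (X j (d j)) := by
      funext t
      by_cases ht : t = j
      · subst ht; simp
      · simp [ht, (hne t ht).1]
    have hY : (fun t => Y t (d t)) = Function.update (fun t => Z t (d t)) j (Y j (d j)) := by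
      funext t
      by_cases ht : t = j
      · subst ht; simp
      · simp [ht, (hne t ht).2]
    have hZ : (fun t => Z t (d t)) =
        Function.update (fun t => Z t (d t)) j (X j (d j) + c • Y j (d j)) := by
      rw [← Pi.smul_apply, ← Pi.add_apply, ← hj, Function.update_eq_self]
    rw [S, S, S, hX, hY, hZ, (hμ d _ j).1, (hμ d _ j).2, el_add, el_smul]
    simp
  · intro H
    have key (d : Fin m → ℤ) (x : ∀ t, L (d t)) (j : Fin m) (c : k) (a b : L (d j)) :
        μ d (Function.update x j (a + c • b)) =
          μ d (Function.update x j a) + c • μ d (Function.update x j b) := by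
      have := H d (fun t => el (Function.update x j a t)) (fun t => el (Function.update x j b t))
        (fun t => el (Function.update x j (a + c • b) t)) j c
        ⟨by simp [el_add, el_smul], fun t ht => by simp [ht]⟩
      rw [S_el, S_el, S_el, ← el_smul, ← el_add] at this
      exact el_injective this
    intro d x j
    have hadd (a b : L (d j)) : μ d (Function.update x j (a + b)) =
        μ d (Function.update x j a) + μ d (Function.update x j b) := by
      simpa using key d x j 1 a b
    refine ⟨hadd, fun c a => ?_⟩
    have h0 : μ d (Function.update x j 0) = 0 := by simpa using hadd 0 0
    simpa [h0] using key d x j c 0 a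

namespace IsMultilinear

theorem add {m : ℕ} {r : ℤ} {μ ν : MMap L M m r} (hμ : IsMultilinear k μ)
    (hν : IsMultilinear k ν) : IsMultilinear k (μ + ν) := by
  rw [isMultilinear_iff] at *
  intro d X Y Z j c hj
  rw [S_add, S_add, S_add, hμ d X Y Z j c hj, hν d X Y Z j c hj, smul_add]
  abel

theorem neg {m : ℕ} {r : ℤ} {μ : MMap L M m r} (hμ : IsMultilinear k μ) :
    IsMultilinear k (-μ) := by
  rw [isMultilinear_iff] at *
  intro d X Y Z j c hj
  rw [S_neg, S_neg, S_neg, hμ d X Y Z j c hj, smul_neg]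
  abel

theorem sub {m : ℕ} {r : ℤ} {μ ν : MMap L M m r} (hμ : IsMultilinear k μ)
    (hν : IsMultilinear k ν) : IsMultilinear k (μ - ν) := by
  rw [sub_eq_add_neg]
  exact hμ.add hν.neg

theorem zsmul {m : ℕ} {r : ℤ} (a : ℤ) {μ : MMap L M m r} (hμ : IsMultilinear k μ) :
    IsMultilinear k (a • μ) := by
  rw [isMultilinear_iff] at *
  intro d X Y Z j c hj
  rw [S_zsmul, S_zsmul, S_zsmul, hμ d X Y Z j c hj, smul_add, smul_comm a c]

theorem pa {m : ℕ} {r : ℤ} (σ : Equiv.Perm (Fin m)) {μ : MMap L M m r}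
    (hμ : IsMultilinear k μ) : IsMultilinear k (pa σ μ) := by
  rw [isMultilinear_iff] at *
  rintro d X Y Z j c ⟨hj, hne⟩
  rw [S_pa, S_pa, S_pa, hμ _ _ _ _ (σ j) c ⟨by simpa using hj, fun t ht => hne _ ?_⟩,
    smul_add, smul_comm _ c]
  rintro rfl
  simp at ht

theorem fc1 {m : ℕ} {R r s : ℤ} {μ : MMap M N 1 r} {g : MMap L M m s}
    (hμ : IsMultilinear k μ) (hg : IsMultilinear k g) (h : r + s = R) :
    IsMultilinear k (fc1 R μ g h) := by
  rw [isMultilinear_iff] at *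
  intro d X Y Z j c hj
  rw [S_fc1, S_fc1, S_fc1]
  exact hμ _ _ _ _ 0 c ⟨hg d X Y Z j c hj, fun t ht => absurd (Subsingleton.elim t 0) ht⟩

theorem pc {m₁ m₂ n : ℕ} {R r s : ℤ} {μ : MMap L M (m₁ + 1 + m₂) r} {ν : MMap L L n s}
    (hμ : IsMultilinear k μ) (hν : IsMultilinear k ν) (h : r + s = R) :
    IsMultilinear k (pc R m₁ m₂ μ ν h) := by
  rw [isMultilinear_iff] at *
  rintro d X Y Z j c ⟨hj, hne⟩
  rw [WL3.pc, S_mcast, S_mcast, S_mcast, S_pcomp, S_pcomp, S_pcomp, smul_comm c, ← smul_add]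
  congr 1
  induction j using Fin.addCases with
  | left j =>
    induction j using Fin.addCases with
    | left j =>
      refine hμ _ _ _ _ (Fin.castAdd m₂ (Fin.castAdd 1 j)) c ⟨by simpa using hj, fun t ht => ?_⟩
      induction t using Fin.addCases with
      | left t =>
        induction t using Fin.addCases with
        | left t => simpa using hne _ fun e => ht (by simpa [Fin.ext_iff] using e)
        | right t =>
          simp only [Fin.append_left, Fin.append_right]
          have e (t) := hne (Fin.castAdd m₂ (Fin.natAdd m₁ t)) fun e => by
            simp [Fin.ext_iff] at e; omega
          simp only [fun t => (e t).1, fun t => (e t).2, and_self]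
      | right t =>
        simpa using hne (Fin.natAdd (m₁ + n) t) fun e => by simp [Fin.ext_iff] at e; omega
    | right j =>
      refine hμ _ _ _ _ (Fin.castAdd m₂ (Fin.natAdd m₁ 0)) c ⟨?_, fun t ht => ?_⟩
      · simp only [Fin.append_left, Fin.append_right]
        exact hν _ _ _ _ j c ⟨hj, fun t ht => hne _ fun e => ht (by simpa [Fin.ext_iff] using e)⟩
      · induction t using Fin.addCases with
        | left t =>
          induction t using Fin.addCases with
          | left t =>
            simpa using hne (Fin.castAdd m₂ (Fin.castAdd n t)) fun e => by
              simp [Fin.ext_iff] at e; omega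
          | right t => exact absurd (by rw [Subsingleton.elim t 0]) ht
        | right t =>
          simpa using hne (Fin.natAdd (m₁ + n) t) fun e => by simp [Fin.ext_iff] at e; omega
  | right j =>
    refine hμ _ _ _ _ (Fin.natAdd (m₁ + 1) j) c ⟨by simpa using hj, fun t ht => ?_⟩
    induction t using Fin.addCases with
    | left t =>
      induction t using Fin.addCases with
      | left t =>
        simpa using hne (Fin.castAdd m₂ (Fin.castAdd n t)) fun e => by
          simp [Fin.ext_iff] at e; omega
      | right t =>
        simp only [Fin.append_left, Fin.append_right]
        have e (t) := hne (Fin.castAdd m₂ (Fin.natAdd m₁ t)) fun e => by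
          simp [Fin.ext_iff] at e; omega
        simp only [fun t => (e t).1, fun t => (e t).2, and_self]
    | right t => simpa using hne _ fun e => ht (by simpa [Fin.ext_iff] using e)

theorem fc2 {m₁ m₂ : ℕ} {R r s₁ s₂ : ℤ} {μ : MMap M N 2 r} {f : MMap L M m₁ s₁}
    {g : MMap L M m₂ s₂} (hμ : IsMultilinear k μ) (hf : IsMultilinear k f)
    (hg : IsMultilinear k g) (h : r + (s₁ + s₂) = R) : IsMultilinear k (fc2 R μ f g h) := by
  rw [isMultilinear_iff] at *
  rintro d X Y Z j c ⟨hj, hne⟩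
  rw [WL3.fc2, S_mcast, S_mcast, S_mcast, S_comp₂, S_comp₂, S_comp₂, smul_comm c, ← smul_add]
  congr 1
  induction j using Fin.addCases with
  | left j =>
    refine hμ _ _ _ _ 0 c ⟨hf _ _ _ _ j c ⟨hj, fun t ht => hne _ ?_⟩, fun t ht => ?_⟩
    · exact fun e => ht (by simpa [Fin.ext_iff] using e)
    · have e (t) := hne (Fin.natAdd m₁ t) fun e => by simp [Fin.ext_iff] at e; omega
      simp only [fun t => (e t).1, fun t => (e t).2]
      fin_cases t <;> first | exact absurd rfl ht | exact ⟨rfl, rfl⟩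
  | right j =>
    refine hμ _ _ _ _ 1 c ⟨hg _ _ _ _ j c ⟨hj, fun t ht => hne _ ?_⟩, fun t ht => ?_⟩
    · exact fun e => ht (by simpa [Fin.ext_iff] using e)
    · have e (t) := hne (Fin.castAdd m₂ t) fun e => by simp [Fin.ext_iff] at e; omega
      simp only [fun t => (e t).1, fun t => (e t).2]
      fin_cases t <;> first | exact absurd rfl ht | exact ⟨rfl, rfl⟩

theorem fc3 {m₁ m₂ m₃ : ℕ} {R r s₁ s₂ s₃ : ℤ} {μ : MMap M N 3 r}
    {f : MMap L M m₁ s₁} {g : MMap L M m₂ s₂} {q : MMap L M m₃ s₃}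
    (hμ : IsMultilinear k μ) (hf : IsMultilinear k f) (hg : IsMultilinear k g)
    (hq : IsMultilinear k q) (h : r + (s₁ + s₂ + s₃) = R) : IsMultilinear k (fc3 R μ f g q h) := by
  rw [isMultilinear_iff] at *
  rintro d X Y Z j c ⟨hj, hne⟩
  rw [WL3.fc3, S_mcast, S_mcast, S_mcast, S_comp₃, S_comp₃, S_comp₃, smul_comm c, ← smul_add]
  congr 1
  induction j using Fin.addCases with
  | left j =>
    induction j using Fin.addCases with
    | left j =>
      refine hμ _ _ _ _ 0 c ⟨hf _ _ _ _ j c ⟨hj, fun t ht => hne _ ?_⟩, fun t ht => ?_⟩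
      · exact fun e => ht (by simpa [Fin.ext_iff] using e)
      · have e1 (t) := hne (Fin.castAdd m₃ (Fin.natAdd m₁ t)) fun e => by
          simp [Fin.ext_iff] at e; omega
        have e2 (t) := hne (Fin.natAdd (m₁ + m₂) t) fun e => by
          simp [Fin.ext_iff] at e; omega
        simp only [fun t => (e1 t).1, fun t => (e1 t).2, fun t => (e2 t).1, fun t => (e2 t).2]
        fin_cases t <;> first | exact absurd rfl ht | exact ⟨rfl, rfl⟩
    | right j =>
      refine hμ _ _ _ _ 1 c ⟨hg _ _ _ _ j c ⟨hj, fun t ht => hne _ ?_⟩, fun t ht => ?_⟩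
      · exact fun e => ht (by simpa [Fin.ext_iff] using e)
      · have e0 (t) := hne (Fin.castAdd m₃ (Fin.castAdd m₂ t)) fun e => by
          simp [Fin.ext_iff] at e; omega
        have e2 (t) := hne (Fin.natAdd (m₁ + m₂) t) fun e => by
          simp [Fin.ext_iff] at e; omega
        simp only [fun t => (e0 t).1, fun t => (e0 t).2, fun t => (e2 t).1, fun t => (e2 t).2]
        fin_cases t <;> first | exact absurd rfl ht | exact ⟨rfl, rfl⟩
  | right j =>
    refine hμ _ _ _ _ 2 c ⟨hq _ _ _ _ j c ⟨hj, fun t ht => hne _ ?_⟩, fun t ht => ?_⟩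
    · exact fun e => ht (by simpa [Fin.ext_iff] using e)
    · have e0 (t) := hne (Fin.castAdd m₃ (Fin.castAdd m₂ t)) fun e => by
        simp [Fin.ext_iff] at e; omega
      have e1 (t) := hne (Fin.castAdd m₃ (Fin.natAdd m₁ t)) fun e => by
        simp [Fin.ext_iff] at e; omega
      simp only [fun t => (e0 t).1, fun t => (e0 t).2, fun t => (e1 t).1, fun t => (e1 t).2]
      fin_cases t <;> first | exact absurd rfl ht | exact ⟨rfl, rfl⟩

theorem fc4 {m₁ m₂ m₃ m₄ : ℕ} {R r s₁ s₂ s₃ s₄ : ℤ} {μ : MMap M N 4 r}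
    {f : MMap L M m₁ s₁} {g : MMap L M m₂ s₂} {q : MMap L M m₃ s₃} {w : MMap L M m₄ s₄}
    (hμ : IsMultilinear k μ) (hf : IsMultilinear k f) (hg : IsMultilinear k g)
    (hq : IsMultilinear k q) (hw : IsMultilinear k w)
    (h : r + (s₁ + s₂ + s₃ + s₄) = R) : IsMultilinear k (fc4 R μ f g q w h) := by
  rw [isMultilinear_iff] at *
  rintro d X Y Z j c ⟨hj, hne⟩
  rw [WL3.fc4, S_mcast, S_mcast, S_mcast, S_comp₄, S_comp₄, S_comp₄, smul_comm c, ← smul_add]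
  congr 1
  induction j using Fin.addCases with
  | left j =>
    induction j using Fin.addCases with
    | left j =>
      induction j using Fin.addCases with
      | left j =>
        refine hμ _ _ _ _ 0 c ⟨hf _ _ _ _ j c ⟨hj, fun t ht => hne _ ?_⟩, fun t ht => ?_⟩
        · exact fun e => ht (by simpa [Fin.ext_iff] using e)
        · have e1 (t) := hne (Fin.castAdd m₄ (Fin.castAdd m₃ (Fin.natAdd m₁ t))) fun e => by
            simp [Fin.ext_iff] at e; omega
          have e2 (t) := hne (Fin.castAdd m₄ (Fin.natAdd (m₁ + m₂) t)) fun e => by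
            simp [Fin.ext_iff] at e; omega
          have e3 (t) := hne (Fin.natAdd (m₁ + m₂ + m₃) t) fun e => by
            simp [Fin.ext_iff] at e; omega
          simp only [fun t => (e1 t).1, fun t => (e1 t).2, fun t => (e2 t).1, fun t => (e2 t).2,
            fun t => (e3 t).1, fun t => (e3 t).2]
          fin_cases t <;> first | exact absurd rfl ht | exact ⟨rfl, rfl⟩
      | right j =>
        refine hμ _ _ _ _ 1 c ⟨hg _ _ _ _ j c ⟨hj, fun t ht => hne _ ?_⟩, fun t ht => ?_⟩
        · exact fun e => ht (by simpa [Fin.ext_iff] using e)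
        · have e0 (t) := hne (Fin.castAdd m₄ (Fin.castAdd m₃ (Fin.castAdd m₂ t))) fun e => by
            simp [Fin.ext_iff] at e; omega
          have e2 (t) := hne (Fin.castAdd m₄ (Fin.natAdd (m₁ + m₂) t)) fun e => by
            simp [Fin.ext_iff] at e; omega
          have e3 (t) := hne (Fin.natAdd (m₁ + m₂ + m₃) t) fun e => by
            simp [Fin.ext_iff] at e; omega
          simp only [fun t => (e0 t).1, fun t => (e0 t).2, fun t => (e2 t).1, fun t => (e2 t).2,
            fun t => (e3 t).1, fun t => (e3 t).2]
          fin_cases t <;> first | exact absurd rfl ht | exact ⟨rfl, rfl⟩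
    | right j =>
      refine hμ _ _ _ _ 2 c ⟨hq _ _ _ _ j c ⟨hj, fun t ht => hne _ ?_⟩, fun t ht => ?_⟩
      · exact fun e => ht (by simpa [Fin.ext_iff] using e)
      · have e0 (t) := hne (Fin.castAdd m₄ (Fin.castAdd m₃ (Fin.castAdd m₂ t))) fun e => by
          simp [Fin.ext_iff] at e; omega
        have e1 (t) := hne (Fin.castAdd m₄ (Fin.castAdd m₃ (Fin.natAdd m₁ t))) fun e => by
          simp [Fin.ext_iff] at e; omega
        have e3 (t) := hne (Fin.natAdd (m₁ + m₂ + m₃) t) fun e => by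
          simp [Fin.ext_iff] at e; omega
        simp only [fun t => (e0 t).1, fun t => (e0 t).2, fun t => (e1 t).1, fun t => (e1 t).2,
          fun t => (e3 t).1, fun t => (e3 t).2]
        fin_cases t <;> first | exact absurd rfl ht | exact ⟨rfl, rfl⟩
  | right j =>
    refine hμ _ _ _ _ 3 c ⟨hw _ _ _ _ j c ⟨hj, fun t ht => hne _ ?_⟩, fun t ht => ?_⟩
    · exact fun e => ht (by simpa [Fin.ext_iff] using e)
    · have e0 (t) := hne (Fin.castAdd m₄ (Fin.castAdd m₃ (Fin.castAdd m₂ t))) fun e => by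
        simp [Fin.ext_iff] at e; omega
      have e1 (t) := hne (Fin.castAdd m₄ (Fin.castAdd m₃ (Fin.natAdd m₁ t))) fun e => by
        simp [Fin.ext_iff] at e; omega
      have e2 (t) := hne (Fin.castAdd m₄ (Fin.natAdd (m₁ + m₂) t)) fun e => by
        simp [Fin.ext_iff] at e; omega
      simp only [fun t => (e0 t).1, fun t => (e0 t).2, fun t => (e1 t).1, fun t => (e1 t).2,
        fun t => (e2 t).1, fun t => (e2 t).2]
      fin_cases t <;> first | exact absurd rfl ht | exact ⟨rfl, rfl⟩

end IsMultilinear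

end Linearity

section Slots

theorem additive_facts {G H : Type} [AddCommGroup G] [AddCommGroup H] {f : G → H}
    (hf : ∀ X Y, f (X + Y) = f X + f Y) :
    (∀ X Y, f (X + Y) = f X + f Y) ∧ (∀ X, f (-X) = -f X) ∧ (∀ X Y, f (X - Y) = f X - f Y) ∧
      f 0 = 0 :=
  let F := AddMonoidHom.mk' f hf
  ⟨hf, F.map_neg, F.map_sub, F.map_zero⟩

variable {k : Type} [CommRing k] {L M : ℤ → Type}
  [∀ i, AddCommGroup (L i)] [∀ i, Module k (L i)]
  [∀ i, AddCommGroup (M i)] [∀ i, Module k (M i)]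

namespace IsMultilinear

theorem S_add_slot {m : ℕ} {r : ℤ} {μ : MMap L M m r} (hμ : IsMultilinear k μ)
    (d : Fin m → ℤ) {X Y Z : Fin m → ∀ n, L n} (j : Fin m) (hj : Z j = X j + Y j)
    (hne : ∀ t, t ≠ j → X t = Z t ∧ Y t = Z t) : S μ d Z = S μ d X + S μ d Y := by
  simpa using isMultilinear_iff.1 hμ d X Y Z j 1 ⟨by simpa using hj, hne⟩

theorem S_eq_zero {m : ℕ} {r : ℤ} {μ : MMap L M m r} (hμ : IsMultilinear k μ)
    {d : Fin m → ℤ} {X : Fin m → ∀ n, L n} (j : Fin m) (hj : X j (d j) = 0) : S μ d X = 0 := by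
  have h : (fun t => X t (d t)) = Function.update (fun t => X t (d t)) j 0 := by
    rw [← hj, Function.update_eq_self]
  have h0 := (hμ d (fun t => X t (d t)) j).2 0 0
  simp only [zero_smul] at h0
  rw [S, h, h0, el_zero]

theorem one_slot {r : ℤ} {μ : MMap L M 1 r} (hμ : IsMultilinear k μ) (a : ℤ) :
    (∀ X Y, S μ ![a] ![X + Y] = S μ ![a] ![X] + S μ ![a] ![Y]) ∧
    (∀ X, S μ ![a] ![-X] = -S μ ![a] ![X]) ∧
    (∀ X Y, S μ ![a] ![X - Y] = S μ ![a] ![X] - S μ ![a] ![Y]) ∧ S μ ![a] ![0] = 0 :=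
  additive_facts (f := fun X => S μ ![a] ![X]) fun _ _ =>
    hμ.S_add_slot _ 0 rfl fun t ht => absurd (Subsingleton.elim t 0) ht

theorem one_slot_zsmul {r : ℤ} {μ : MMap L M 1 r} (hμ : IsMultilinear k μ) (a c : ℤ)
    (X : ∀ n, L n) : S μ ![a] ![c • X] = c • S μ ![a] ![X] :=
  (AddMonoidHom.mk' (fun X => S μ ![a] ![X]) (hμ.one_slot a).1).map_zsmul c X

theorem two_slots {r : ℤ} {μ : MMap L M 2 r} (hμ : IsMultilinear k μ) (a b : ℤ)
    (V : ∀ n, L n) :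
    ((∀ X Y, S μ ![a, b] ![X + Y, V] = S μ ![a, b] ![X, V] + S μ ![a, b] ![Y, V]) ∧
    (∀ X, S μ ![a, b] ![-X, V] = -S μ ![a, b] ![X, V]) ∧
    (∀ X Y, S μ ![a, b] ![X - Y, V] = S μ ![a, b] ![X, V] - S μ ![a, b] ![Y, V]) ∧
    S μ ![a, b] ![0, V] = 0) ∧
    ((∀ X Y, S μ ![a, b] ![V, X + Y] = S μ ![a, b] ![V, X] + S μ ![a, b] ![V, Y]) ∧
    (∀ X, S μ ![a, b] ![V, -X] = -S μ ![a, b] ![V, X]) ∧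
    (∀ X Y, S μ ![a, b] ![V, X - Y] = S μ ![a, b] ![V, X] - S μ ![a, b] ![V, Y]) ∧
    S μ ![a, b] ![V, 0] = 0) := by
  refine ⟨additive_facts (f := fun X => S μ ![a, b] ![X, V]) fun X Y => ?_,
    additive_facts (f := fun X => S μ ![a, b] ![V, X]) fun X Y => ?_⟩
  · exact hμ.S_add_slot _ 0 rfl fun t ht => by fin_cases t <;> simp at ht ⊢
  · exact hμ.S_add_slot _ 1 rfl fun t ht => by fin_cases t <;> simp at ht ⊢

theorem three_slots {r : ℤ} {μ : MMap L M 3 r} (hμ : IsMultilinear k μ) (a b c : ℤ)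
    (V W : ∀ n, L n) :
    ((∀ X Y, S μ ![a, b, c] ![X + Y, V, W] =
        S μ ![a, b, c] ![X, V, W] + S μ ![a, b, c] ![Y, V, W]) ∧
    (∀ X, S μ ![a, b, c] ![-X, V, W] = -S μ ![a, b, c] ![X, V, W]) ∧
    (∀ X Y, S μ ![a, b, c] ![X - Y, V, W] =
        S μ ![a, b, c] ![X, V, W] - S μ ![a, b, c] ![Y, V, W]) ∧
    S μ ![a, b, c] ![0, V, W] = 0) ∧
    ((∀ X Y, S μ ![a, b, c] ![V, X + Y, W] =
        S μ ![a, b, c] ![V, X, W] + S μ ![a, b, c] ![V, Y, W]) ∧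
    (∀ X, S μ ![a, b, c] ![V, -X, W] = -S μ ![a, b, c] ![V, X, W]) ∧
    (∀ X Y, S μ ![a, b, c] ![V, X - Y, W] =
        S μ ![a, b, c] ![V, X, W] - S μ ![a, b, c] ![V, Y, W]) ∧
    S μ ![a, b, c] ![V, 0, W] = 0) ∧
    ((∀ X Y, S μ ![a, b, c] ![V, W, X + Y] =
        S μ ![a, b, c] ![V, W, X] + S μ ![a, b, c] ![V, W, Y]) ∧
    (∀ X, S μ ![a, b, c] ![V, W, -X] = -S μ ![a, b, c] ![V, W, X]) ∧
    (∀ X Y, S μ ![a, b, c] ![V, W, X - Y] =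
        S μ ![a, b, c] ![V, W, X] - S μ ![a, b, c] ![V, W, Y]) ∧
    S μ ![a, b, c] ![V, W, 0] = 0) := by
  refine ⟨additive_facts (f := fun X => S μ ![a, b, c] ![X, V, W]) fun X Y => ?_,
    additive_facts (f := fun X => S μ ![a, b, c] ![V, X, W]) fun X Y => ?_,
    additive_facts (f := fun X => S μ ![a, b, c] ![V, W, X]) fun X Y => ?_⟩
  · exact hμ.S_add_slot _ 0 rfl fun t ht => by fin_cases t <;> simp at ht ⊢
  · exact hμ.S_add_slot _ 1 rfl fun t ht => by fin_cases t <;> simp at ht ⊢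
  · exact hμ.S_add_slot _ 2 rfl fun t ht => by fin_cases t <;> simp at ht ⊢

theorem ext_of_bound {m : ℕ} {r : ℤ} {μ ν : MMap L M m r} (hμ : IsMultilinear k μ)
    (hν : IsMultilinear k ν) (hL : ∀ n : ℤ, n < 0 → ∀ x : L n, x = 0)
    (hM : ∀ n : ℤ, 2 < n → ∀ x : M n, x = 0)
    (H : ∀ d : Fin m → ℤ, (∀ j, 0 ≤ d j) → r + ∑ j, d j ≤ 2 → ∀ X, S μ d X = S ν d X) :
    μ = ν := by
  refine MMap.ext_S fun d X => ?_
  by_cases hd : ∀ j, 0 ≤ d j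
  · by_cases h2 : r + ∑ j, d j ≤ 2
    · exact H d hd h2 X
    · rw [S, S, hM _ (not_le.1 h2) (μ _ _), hM _ (not_le.1 h2) (ν _ _)]
  · push Not at hd
    obtain ⟨j, hj⟩ := hd
    rw [hμ.S_eq_zero j (hL _ hj _), hν.S_eq_zero j (hL _ hj _)]

end IsMultilinear

theorem S_eq_zero_of_target {m : ℕ} {r : ℤ} (μ : MMap L M m r) {d : Fin m → ℤ}
    (h : ∀ x : M (r + ∑ j, d j), x = 0) (X : Fin m → ∀ n, L n) : S μ d X = 0 := by
  rw [S, h (μ _ _), el_zero]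

end Slots

section Homotopy

variable {k : Type} [CommRing k] {L L' : ℤ → Type}
  [∀ i, AddCommGroup (L i)] [∀ i, Module k (L i)]
  [∀ i, AddCommGroup (L' i)] [∀ i, Module k (L' i)]

theorem IsDefRetract.S_i_p {D : MMap L L 1 (-1)} {D' : MMap L' L' 1 (-1)} {p : MMap L L' 1 0}
    {i : MMap L' L 1 0} {h : MMap L L 1 1} (hret : IsDefRetract k D D' p i h) (n : ℤ)
    (X : ∀ j, L j) :
    S i ![n] ![S p ![n] ![X]] =
      el (X n) - S D ![1 + n] ![S h ![n] ![X]] - S h ![-1 + n] ![S D ![n] ![X]] := by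
  have := congrArg (fun μ => S μ ![n] ![X]) hret.homotopy
  simp only [S_sub, S_add, S_idm, S_fc1, Fin.sum_univ_one, Matrix.cons_val_zero, zero_add] at this
  rw [sub_sub, ← this, sub_sub_cancel]

theorem IsDefRetract.S_D_i {D : MMap L L 1 (-1)} {D' : MMap L' L' 1 (-1)} {p : MMap L L' 1 0}
    {i : MMap L' L 1 0} {h : MMap L L 1 1} (hret : IsDefRetract k D D' p i h) (n : ℤ)
    (X : ∀ j, L' j) :
    S D ![n] ![S i ![n] ![X]] = S i ![-1 + n] ![S D' ![n] ![X]] := by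
  have := congrArg (fun μ => S μ ![n] ![X]) hret.chaini
  rw [bd_one _ _ _ (by norm_num)] at this
  simpa [S_sub, S_zero, S_zsmul, S_fc1, sub_eq_zero, S_pc_0_1_0] using this

end Homotopy

section Structure

variable {k : Type} [CommRing k] {L : ℤ → Type} [∀ i, AddCommGroup (L i)] [∀ i, Module k (L i)]
  (A : WeakLie3 k L)

namespace WeakLie3

theorem S_D_zero (X : ∀ n, L n) : S A.D ![0] ![X] = 0 :=
  S_eq_zero_of_target _ (A.bound _ (by simp)) _

theorem S_target_three (A : WeakLie3 k L) (h : MMap L L 1 1) (X : ∀ n, L n) : S h ![2] ![X] = 0 :=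
  S_eq_zero_of_target h (A.bound _ (by simp)) _

theorem S_D_l2 {a b n : ℤ} (hn : a + b = n) (X Y : ∀ n, L n) :
    S A.D ![n] ![S A.l2 ![a, b] ![X, Y]] =
      S A.l2 ![-1 + a, b] ![S A.D ![a] ![X], Y] +
        (-1 : ℤ) ^ a.natAbs • S A.l2 ![a, -1 + b] ![X, S A.D ![b] ![Y]] := by
  subst hn
  have := congrArg (fun μ => S μ ![a, b] ![X, Y]) A.leib.eqL1
  rw [bd_two _ _ _ (by norm_num)] at this
  simpa [S_sub, S_add, S_zero, S_zsmul, S_fc1, sub_eq_zero, S_pc_0_1_1, S_pc_1_1_0] using this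

theorem S_D_l3 {a b c n : ℤ} (hn : 1 + (a + b + c) = n) (X Y Z : ∀ n, L n) :
    S A.D ![n] ![S A.l3 ![a, b, c] ![X, Y, Z]] =
      S A.l2 ![a, b + c] ![X, S A.l2 ![b, c] ![Y, Z]]
        - S A.l2 ![a + b, c] ![S A.l2 ![a, b] ![X, Y], Z]
        - (-1 : ℤ) ^ (a * b).natAbs • S A.l2 ![b, a + c] ![Y, S A.l2 ![a, c] ![X, Z]]
        - (S A.l3 ![-1 + a, b, c] ![S A.D ![a] ![X], Y, Z]
          + (-1 : ℤ) ^ a.natAbs • S A.l3 ![a, -1 + b, c] ![X, S A.D ![b] ![Y], Z]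
          + (-1 : ℤ) ^ (a + b).natAbs • S A.l3 ![a, b, -1 + c] ![X, Y, S A.D ![c] ![Z]]) := by
  subst hn
  have := congrArg (fun μ => S μ ![a, b, c] ![X, Y, Z]) A.leib.eqL2
  rw [bd_three _ _ _ (by norm_num)] at this
  simp [S_sub, S_add, S_neg, S_fc1, S_pc_0_1_2, S_pc_1_1_1, S_pc_2_1_0,
    S_pc_0_2_1, S_pc_1_2_0, S_pa_P12_three, Fin.sum_univ_three] at this
  rw [show (-b + -a).natAbs = (a + b).natAbs by omega] at this
  rw [← this]
  abel

theorem S_D_l21 {a b n : ℤ} (hn : 1 + (a + b) = n) (X Y : ∀ n, L n) :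
    S A.D ![n] ![S A.l21 ![a, b] ![X, Y]] =
      S A.l2 ![a, b] ![X, Y] + (-1 : ℤ) ^ (a * b).natAbs • S A.l2 ![b, a] ![Y, X]
        - (S A.l21 ![-1 + a, b] ![S A.D ![a] ![X], Y]
          + (-1 : ℤ) ^ a.natAbs • S A.l21 ![a, -1 + b] ![X, S A.D ![b] ![Y]]) := by
  subst hn
  have := congrArg (fun μ => S μ ![a, b] ![X, Y]) A.w1
  rw [bd_two _ _ _ (by norm_num)] at this
  simp [S_sub, S_add, S_neg, S_fc1, S_pc_0_1_1, S_pc_1_1_0, S_pa_P12_two] at this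
  rw [← this]
  abel

theorem S_D_l211_zero (X Y : ∀ n, L n) :
    S A.D ![2] ![S A.l211 ![0, 0] ![X, Y]] =
      S A.l21 ![0, 0] ![X, Y] - S A.l21 ![0, 0] ![Y, X] := by
  have := congrArg (fun μ => S μ ![0, 0] ![X, Y]) A.w2
  rw [bd_two _ _ _ (by norm_num)] at this
  simpa [S_sub, S_add, S_neg, S_fc1, S_pc_0_1_1, S_pc_1_1_0, S_pa_P12_two,
    S_D_zero, A.lin211.two_slots] using this

theorem S_D_l31_zero (X Y Z : ∀ n, L n) :
    S A.D ![2] ![S A.l31 ![0, 0, 0] ![X, Y, Z]] =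
      S A.l3 ![0, 0, 0] ![X, Y, Z] + S A.l3 ![0, 0, 0] ![Y, X, Z]
        + S A.l2 ![1, 0] ![S A.l21 ![0, 0] ![X, Y], Z] := by
  have := congrArg (fun μ => S μ ![0, 0, 0] ![X, Y, Z]) A.w3
  rw [bd_three _ _ _ (by norm_num)] at this
  simpa [S_sub, S_add, S_neg, S_fc1, S_pc_0_1_2, S_pc_1_1_1, S_pc_2_1_0,
    S_pc_0_2_1, S_pc_1_2_0, S_pa_P12_three, Fin.sum_univ_three, S_D_zero,
    A.lin31.three_slots] using this

theorem S_D_l32_zero (X Y Z : ∀ n, L n) :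
    S A.D ![2] ![S A.l32 ![0, 0, 0] ![X, Y, Z]] =
      S A.l3 ![0, 0, 0] ![X, Y, Z] + S A.l3 ![0, 0, 0] ![X, Z, Y]
        - S A.l2 ![0, 1] ![X, S A.l21 ![0, 0] ![Y, Z]]
        + S A.l21 ![0, 0] ![S A.l2 ![0, 0] ![X, Y], Z]
        + S A.l21 ![0, 0] ![Y, S A.l2 ![0, 0] ![X, Z]] := by
  have := congrArg (fun μ => S μ ![0, 0, 0] ![X, Y, Z]) A.w4
  rw [bd_three _ _ _ (by norm_num)] at this
  simpa [S_sub, S_add, S_neg, S_fc1, S_pc_0_1_2, S_pc_1_1_1, S_pc_2_1_0,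
    S_pc_0_2_1, S_pc_1_2_0, S_pa_P12_three, S_pa_P23_three_zero, Fin.sum_univ_three, S_D_zero,
    A.lin32.three_slots] using this

theorem S_D_l4_zero (X Y Z W : ∀ n, L n) :
    S A.D ![2] ![S A.l4 ![0, 0, 0, 0] ![X, Y, Z, W]] =
      S A.l2 ![1, 0] ![S A.l3 ![0, 0, 0] ![X, Y, Z], W]
        + S A.l2 ![0, 1] ![X, S A.l3 ![0, 0, 0] ![Y, Z, W]]
        - S A.l2 ![0, 1] ![Y, S A.l3 ![0, 0, 0] ![X, Z, W]]
        + S A.l2 ![0, 1] ![Z, S A.l3 ![0, 0, 0] ![X, Y, W]]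
        - S A.l3 ![0, 0, 0] ![S A.l2 ![0, 0] ![X, Y], Z, W]
        + S A.l3 ![0, 0, 0] ![X, S A.l2 ![0, 0] ![Y, Z], W]
        - S A.l3 ![0, 0, 0] ![Y, S A.l2 ![0, 0] ![X, Z], W]
        - S A.l3 ![0, 0, 0] ![X, Y, S A.l2 ![0, 0] ![Z, W]]
        + S A.l3 ![0, 0, 0] ![X, Z, S A.l2 ![0, 0] ![Y, W]]
        - S A.l3 ![0, 0, 0] ![Y, Z, S A.l2 ![0, 0] ![X, W]] := by
  have h0 : ∀ (d : Fin 4 → ℤ) (V : Fin 4 → ∀ n, L n) (j : Fin 4), V j = 0 →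
      S A.l4 d V = 0 := fun d V j hj => A.leib.lin4.S_eq_zero j (by rw [hj]; rfl)
  have := congrArg (fun μ => S μ ![0, 0, 0, 0] ![X, Y, Z, W]) A.leib.eqL3
  rw [bd_four _ _ _ (by norm_num)] at this
  simpa [S_sub, S_add, S_neg, S_fc1, S_pc_0_1_3, S_pc_1_1_2, S_pc_2_1_1, S_pc_3_1_0,
    S_pc_0_3_1, S_pc_1_3_0, S_pc_0_2_2, S_pc_1_2_1, S_pc_2_2_0, S_pa_P12_four_zero,
    S_pa_P23_four_zero, S_pa_P123_four_zero, S_pa_P132_four_zero, Fin.sum_univ_four, S_D_zero,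
    h0 _ ![0, _, _, _] 0 rfl, h0 _ ![_, 0, _, _] 1 rfl, h0 _ ![_, _, 0, _] 2 rfl,
    h0 _ ![_, _, _, 0] 3 rfl] using this

end WeakLie3

end Structure

section Ext

variable {k : Type} [CommRing k] {L M : ℤ → Type}
  [∀ i, AddCommGroup (L i)] [∀ i, Module k (L i)]
  [∀ i, AddCommGroup (M i)] [∀ i, Module k (M i)] {r : ℤ}

theorem MMap.ext_two {μ ν : MMap L M 2 r}
    (H : ∀ a b X Y, S μ ![a, b] ![X, Y] = S ν ![a, b] ![X, Y]) : μ = ν := by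
  refine MMap.ext_S fun d X => ?_
  rw [← FinVec.etaExpand_eq d, ← FinVec.etaExpand_eq X]
  exact H _ _ _ _

theorem IsMultilinear.ext_two_zero {μ ν : MMap L M 2 2} (hμ : IsMultilinear k μ)
    (hν : IsMultilinear k ν) (hL : ∀ n : ℤ, n < 0 → ∀ x : L n, x = 0)
    (hM : ∀ n : ℤ, 2 < n → ∀ x : M n, x = 0)
    (H : ∀ X Y, S μ ![0, 0] ![X, Y] = S ν ![0, 0] ![X, Y]) : μ = ν := by
  refine hμ.ext_of_bound hν hL hM fun d hd h2 X => ?_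
  have : d = ![0, 0] := by
    rw [Fin.sum_univ_two] at h2
    have := hd 0; have := hd 1
    ext j; fin_cases j <;> simp <;> omega
  rw [this, ← FinVec.etaExpand_eq X]
  exact H _ _

theorem IsMultilinear.ext_three_zero {μ ν : MMap L M 3 2} (hμ : IsMultilinear k μ)
    (hν : IsMultilinear k ν) (hL : ∀ n : ℤ, n < 0 → ∀ x : L n, x = 0)
    (hM : ∀ n : ℤ, 2 < n → ∀ x : M n, x = 0)
    (H : ∀ X Y Z, S μ ![0, 0, 0] ![X, Y, Z] = S ν ![0, 0, 0] ![X, Y, Z]) : μ = ν := by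
  refine hμ.ext_of_bound hν hL hM fun d hd h2 X => ?_
  have : d = ![0, 0, 0] := by
    rw [Fin.sum_univ_three] at h2
    have := hd 0; have := hd 1; have := hd 2
    ext j; fin_cases j <;> simp <;> omega
  rw [this, ← FinVec.etaExpand_eq X]
  exact H _ _ _

theorem IsMultilinear.ext_four_zero {μ ν : MMap L M 4 2} (hμ : IsMultilinear k μ)
    (hν : IsMultilinear k ν) (hL : ∀ n : ℤ, n < 0 → ∀ x : L n, x = 0)
    (hM : ∀ n : ℤ, 2 < n → ∀ x : M n, x = 0)
    (H : ∀ X Y Z W, S μ ![0, 0, 0, 0] ![X, Y, Z, W] = S ν ![0, 0, 0, 0] ![X, Y, Z, W]) :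
    μ = ν := by
  refine hμ.ext_of_bound hν hL hM fun d hd h2 X => ?_
  have : d = ![0, 0, 0, 0] := by
    rw [Fin.sum_univ_four] at h2
    have := hd 0; have := hd 1; have := hd 2; have := hd 3
    ext j; fin_cases j <;> simp <;> omega
  rw [this, ← FinVec.etaExpand_eq X]
  exact H _ _ _ _

theorem IsMultilinear.ext_three_one {μ ν : MMap L M 3 1} (hμ : IsMultilinear k μ)
    (hν : IsMultilinear k ν) (hL : ∀ n : ℤ, n < 0 → ∀ x : L n, x = 0)
    (hM : ∀ n : ℤ, 2 < n → ∀ x : M n, x = 0)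
    (H₀ : ∀ X Y Z, S μ ![0, 0, 0] ![X, Y, Z] = S ν ![0, 0, 0] ![X, Y, Z])
    (H₁ : ∀ X Y Z, S μ ![1, 0, 0] ![X, Y, Z] = S ν ![1, 0, 0] ![X, Y, Z])
    (H₂ : ∀ X Y Z, S μ ![0, 1, 0] ![X, Y, Z] = S ν ![0, 1, 0] ![X, Y, Z])
    (H₃ : ∀ X Y Z, S μ ![0, 0, 1] ![X, Y, Z] = S ν ![0, 0, 1] ![X, Y, Z]) : μ = ν := by
  refine hμ.ext_of_bound hν hL hM fun d hd h2 X => ?_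
  have : d = ![0, 0, 0] ∨ d = ![1, 0, 0] ∨ d = ![0, 1, 0] ∨ d = ![0, 0, 1] := by
    rw [Fin.sum_univ_three] at h2
    have := hd 0; have := hd 1; have := hd 2
    rw [← FinVec.etaExpand_eq d]
    change ![d 0, d 1, d 2] = _ ∨ ![d 0, d 1, d 2] = _ ∨ ![d 0, d 1, d 2] = _ ∨
      ![d 0, d 1, d 2] = _
    simp
    omega
  rw [← FinVec.etaExpand_eq X]
  rcases this with rfl | rfl | rfl | rfl
  exacts [H₀ _ _ _, H₁ _ _ _, H₂ _ _ _, H₃ _ _ _]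

end Ext

section Retract

variable {k : Type} [CommRing k] {L L' : ℤ → Type}
  [∀ i, AddCommGroup (L i)] [∀ i, Module k (L i)]
  [∀ i, AddCommGroup (L' i)] [∀ i, Module k (L' i)]
  {A : WeakLie3 k L} {D' : MMap L' L' 1 (-1)} {p : MMap L L' 1 0} {i : MMap L' L 1 0}
  {h : MMap L L 1 1}

namespace IsDefRetract

theorem isMultilinear_ti2 (hret : IsDefRetract k A.D D' p i h) :
    IsMultilinear k (ti2 A i h) :=
  (hret.linh.fc1 (A.leib.lin2.fc2 hret.lini hret.lini _) _).neg

theorem isMultilinear_ti21 (hret : IsDefRetract k A.D D' p i h) :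
    IsMultilinear k (ti21 A i h) :=
  (hret.linh.fc1 (A.lin21.fc2 hret.lini hret.lini _) _).neg

theorem isMultilinear_hl2 (hret : IsDefRetract k A.D D' p i h) : IsMultilinear k (hl2 A h) :=
  hret.linh.fc1 A.leib.lin2 _

theorem isMultilinear_ti3 (hret : IsDefRetract k A.D D' p i h) :
    IsMultilinear k (ti3 A i h) := by
  have h2 := A.leib.lin2.pc (m₁ := 1) (m₂ := 0) hret.isMultilinear_hl2 (by norm_num : (0:ℤ) + 1 = 1)
  refine ((hret.linh.fc1 (A.leib.lin3.fc3 hret.lini hret.lini hret.lini _) _).neg).sub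
    (hret.linh.fc1 (IsMultilinear.fc3 (IsMultilinear.sub
      (IsMultilinear.pc (m₁ := 0) (m₂ := 1) A.leib.lin2 hret.isMultilinear_hl2 _) (h2.sub (h2.pa
        _)))
      hret.lini hret.lini hret.lini _) _)

theorem bd_ti2 (hret : IsDefRetract k A.D D' p i h) :
    bd 0 A.D D' (ti2 A i h) = fc1 0 i (tl2 A p i) - fc2 0 A.l2 i i := by
  refine MMap.ext_two fun a b X Y => ?_
  rw [bd_two _ _ _ (by norm_num)]
  simp [ti2, tl2, S_sub, S_neg, S_add, S_fc1, S_fc2_1_1, S_pc_0_1_1, S_pc_1_1_0,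
    hret.linh.one_slot, hret.linh.one_slot_zsmul, A.linD.one_slot, hret.S_i_p, el_S,
    ← hret.S_D_i, A.S_D_l2]
  rw [show -1 + a + b = -1 + (a + b) by ring, show a + (-1 + b) = -1 + (a + b) by ring]
  abel

theorem bd_ti21 (hret : IsDefRetract k A.D D' p i h) :
    bd 1 A.D D' (ti21 A i h) =
      - ti2 A i h - pa (P12 2) (ti2 A i h) + fc1 1 i (tl21 A p i) - fc2 1 A.l21 i i := by
  refine MMap.ext_two fun a b X Y => ?_
  rw [bd_two _ _ _ (by norm_num)]
  simp [ti2, ti21, tl21, S_sub, S_neg, S_add, S_fc1, S_fc2_1_1, S_pc_0_1_1, S_pc_1_1_0,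
    hret.linh.one_slot, hret.linh.one_slot_zsmul, A.linD.one_slot, hret.S_i_p, el_S,
    ← hret.S_D_i, A.S_D_l21, S_pa_P12_two]
  rw [show 1 + (-1 + a + b) = a + b by ring, show 1 + (a + (-1 + b)) = a + b by ring,
    show 1 + (1 + (a + b)) = 2 + (a + b) by ring, add_comm b a]
  abel

theorem fc1_i_tl211 (hret : IsDefRetract k A.D D' p i h)
    (hL' : ∀ i : ℤ, (i < 0 ∨ 2 < i) → ∀ x : L' i, x = 0)
    (hlin : IsMultilinear k (tl211 A p i)) :
    fc1 2 i (tl211 A p i) - fc2 2 A.l211 i i = ti21 A i h - pa (P12 2) (ti21 A i h) := by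
  refine IsMultilinear.ext_two_zero
    ((hret.lini.fc1 hlin _).sub (A.lin211.fc2 hret.lini hret.lini _))
    (hret.isMultilinear_ti21.sub (hret.isMultilinear_ti21.pa _))
    (fun n hn => hL' n (.inl hn)) (fun n hn => A.bound n (.inr hn)) fun X Y => ?_
  simp [ti21, tl211, S_sub, S_neg, S_fc1, S_fc2_1_1,
    hret.linh.one_slot, A.linD.one_slot, hret.S_i_p, el_S, A.S_target_three, A.S_D_l211_zero,
    S_pa_P12_two]
  abel

theorem fc1_i_tl31 (hret : IsDefRetract k A.D D' p i h)
    (hL' : ∀ i : ℤ, (i < 0 ∨ 2 < i) → ∀ x : L' i, x = 0)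
    (hl21 : IsMultilinear k (tl21 A p i))
    (hlin : IsMultilinear k (tl31 A p i h)) :
    fc1 2 i (tl31 A p i h) - fc3 2 A.l31 i i i =
      ti3 A i h + pa (P12 3) (ti3 A i h) + pc 2 0 1 (ti2 A i h) (tl21 A p i) +
        fc2 2 A.l2 (ti21 A i h) i := by
  refine IsMultilinear.ext_three_zero
    ((hret.lini.fc1 hlin _).sub (A.lin31.fc3 hret.lini hret.lini hret.lini _))
    (((hret.isMultilinear_ti3.add (hret.isMultilinear_ti3.pa _)).add
      (IsMultilinear.pc (m₁ := 0) (m₂ := 1) hret.isMultilinear_ti2 hl21 _)).add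
      (A.leib.lin2.fc2 hret.isMultilinear_ti21 hret.lini _))
    (fun n hn => hL' n (.inl hn)) (fun n hn => A.bound n (.inr hn)) fun X Y Z => ?_
  simp [ti2, ti21, ti3, tl31, tl21, WL3.hl2, WL3.hl21, S_sub, S_neg, S_add, S_fc1, S_fc2_1_1,
    S_fc2_2_1, S_fc3_1_1_1, S_pc_0_2_1, S_pc_1_2_0, S_pa_P12_three, Fin.sum_univ_three,
    hret.linh.one_slot, A.linD.one_slot, A.lin21.two_slots, hret.lini.one_slot,
    hret.S_i_p, el_S, A.S_target_three, A.S_D_l31_zero,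
    A.S_D_l21, A.S_D_zero, A.S_D_l2, A.leib.lin2.two_slots]
  abel_nf

theorem fc1_i_tl32 (hret : IsDefRetract k A.D D' p i h)
    (hL' : ∀ i : ℤ, (i < 0 ∨ 2 < i) → ∀ x : L' i, x = 0)
    (hl2 : IsMultilinear k (tl2 A p i)) (hl21 : IsMultilinear k (tl21 A p i))
    (hlin : IsMultilinear k (tl32 A p i h)) :
    fc1 2 i (tl32 A p i h) - fc3 2 A.l32 i i i =
      ti3 A i h + pa (P23 3) (ti3 A i h) - pc 2 1 0 (ti2 A i h) (tl21 A p i)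
        + pc 2 0 1 (ti21 A i h) (tl2 A p i) + pa (P12 3) (pc 2 1 0 (ti21 A i h) (tl2 A p i))
        - fc2 2 A.l2 i (ti21 A i h) - fc2 2 A.l21 (ti2 A i h) i
        - pa (P12 3) (fc2 2 A.l21 i (ti2 A i h)) := by
  have h21 := IsMultilinear.pc (R := 2) (m₁ := 1) (m₂ := 0) hret.isMultilinear_ti21 hl2 (by
    norm_num)
  have h2 := IsMultilinear.fc2 (R := 2) A.lin21 hret.lini hret.isMultilinear_ti2 (by norm_num)
  refine IsMultilinear.ext_three_zero
    ((hret.lini.fc1 hlin _).sub (A.lin32.fc3 hret.lini hret.lini hret.lini _))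
    (((((((hret.isMultilinear_ti3.add (hret.isMultilinear_ti3.pa _)).sub
      (IsMultilinear.pc (m₁ := 1) (m₂ := 0) hret.isMultilinear_ti2 hl21 _)).add
      (IsMultilinear.pc (m₁ := 0) (m₂ := 1) hret.isMultilinear_ti21 hl2 _)).add (h21.pa _)).sub
      (A.leib.lin2.fc2 hret.lini hret.isMultilinear_ti21 _)).sub
      (A.lin21.fc2 hret.isMultilinear_ti2 hret.lini _)).sub (h2.pa _))
    (fun n hn => hL' n (.inl hn)) (fun n hn => A.bound n (.inr hn)) fun X Y Z => ?_
  simp [ti2, ti21, ti3, tl32, tl2, tl21, WL3.hl2, WL3.hl21, S_sub, S_neg, S_add, S_fc1, S_fc2_1_1,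
    S_fc2_2_1, S_fc2_1_2, S_fc3_1_1_1, S_pc_0_2_1, S_pc_1_2_0, S_pa_P12_three, S_pa_P23_three_zero,
    Fin.sum_univ_three,
    hret.linh.one_slot, hret.linp.one_slot, A.linD.one_slot, A.lin21.two_slots,
    hret.lini.one_slot, hret.S_i_p, el_S, A.S_target_three, A.S_D_l32_zero, A.S_D_l21, A.S_D_zero,
    A.S_D_l2, A.leib.lin2.two_slots]
  abel_nf

theorem bd_ti3 (hret : IsDefRetract k A.D D' p i h)
    (hL' : ∀ i : ℤ, (i < 0 ∨ 2 < i) → ∀ x : L' i, x = 0) (hD' : IsMultilinear k D')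
    (hl2 : IsMultilinear k (tl2 A p i)) (hl3 : IsMultilinear k (tl3 A p i h)) :
    bd 1 A.D D' (ti3 A i h) =
      fc1 1 i (tl3 A p i h) - pc 1 1 0 (ti2 A i h) (tl2 A p i) + pc 1 0 1 (ti2 A i h) (tl2 A p i)
        + pa (P12 3) (pc 1 1 0 (ti2 A i h) (tl2 A p i)) - fc3 1 A.l3 i i i
        - fc2 1 A.l2 i (ti2 A i h) + fc2 1 A.l2 (ti2 A i h) i
        + pa (P12 3) (fc2 1 A.l2 i (ti2 A i h)) := by
  have hi := hret.lini
  have h2 := hret.isMultilinear_ti2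
  have h3 := hret.isMultilinear_ti3
  have hp := IsMultilinear.pc (R := 1) (m₁ := 1) (m₂ := 0) h2 hl2 (by norm_num)
  have hf := IsMultilinear.fc2 (R := 1) A.leib.lin2 hi h2 (by norm_num)
  have hl : IsMultilinear k (bd 1 A.D D' (ti3 A i h)) := by
    rw [bd_three _ _ _ (by norm_num)]
    exact (A.linD.fc1 h3 _).sub (((IsMultilinear.pc (m₁ := 0) (m₂ := 2) h3 hD' _).add
      (IsMultilinear.pc (m₁ := 1) (m₂ := 1) h3 hD' _)).add
      (IsMultilinear.pc (m₁ := 2) (m₂ := 0) h3 hD' _) |>.zsmul _)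
  have hr := ((((((hi.fc1 hl3 (by norm_num : (0 : ℤ) + 1 = 1)).sub hp).add
    (IsMultilinear.pc (R := 1) (m₁ := 0) (m₂ := 1) h2 hl2 (by norm_num))).add (hp.pa (P12 3))).sub
    (A.leib.lin3.fc3 (R := 1) hi hi hi (by norm_num))).sub hf).add
    (A.leib.lin2.fc2 (R := 1) h2 hi (by norm_num)) |>.add (hf.pa (P12 3))
  have hD'₀ : ∀ X, S D' ![0] ![X] = 0 :=
    fun X => S_eq_zero_of_target D' (hL' _ (by simp)) _
  refine IsMultilinear.ext_three_one hl hr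
    (fun n hn => hL' n (.inl hn)) (fun n hn => A.bound n (.inr hn)) ?_ ?_ ?_ ?_ <;>
  · intro X Y Z
    rw [bd_three _ _ _ (by norm_num)]
    simp [ti2, ti3, tl3, tl2, WL3.hl2, S_sub, S_neg, S_add, S_fc1, S_fc2_1_1, S_fc2_2_1,
      S_pc_0_1_2, S_pc_1_1_1, S_pc_2_1_0, S_fc2_1_2, S_fc3_1_1_1, S_pc_0_2_1, S_pc_1_2_0,
      S_pa_P12_three, Fin.sum_univ_three,
      hret.linh.one_slot, hret.linp.one_slot, A.linD.one_slot, hret.lini.one_slot,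
      hret.S_i_p, el_S, A.S_target_three, A.S_D_l3, A.S_D_zero,
      hret.S_D_i, hD'₀, A.S_D_l2, A.leib.lin2.two_slots, A.leib.lin3.three_slots]
    abel_nf

set_option maxHeartbeats 4000000 in
theorem fc1_i_tl4 (hret : IsDefRetract k A.D D' p i h)
    (hL' : ∀ i : ℤ, (i < 0 ∨ 2 < i) → ∀ x : L' i, x = 0)
    (hl2 : IsMultilinear k (tl2 A p i)) (hl3 : IsMultilinear k (tl3 A p i h))
    (hlin : IsMultilinear k (tl4 A p i h)) :
    fc1 2 i (tl4 A p i h) - fc4 2 A.l4 i i i i =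
      pc 2 0 1 (ti2 A i h) (tl3 A p i h) + pc 2 1 0 (ti2 A i h) (tl3 A p i h)
        - pa (P12 4) (pc 2 1 0 (ti2 A i h) (tl3 A p i h))
        + pa (P123 4) (pc 2 1 0 (ti2 A i h) (tl3 A p i h))
        - pc 2 0 2 (ti3 A i h) (tl2 A p i) + pc 2 1 1 (ti3 A i h) (tl2 A p i)
        - pa (P12 4) (pc 2 1 1 (ti3 A i h) (tl2 A p i)) - pc 2 2 0 (ti3 A i h) (tl2 A p i)
        + pa (P23 4) (pc 2 2 0 (ti3 A i h) (tl2 A p i))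
        - pa (P132 4) (pc 2 2 0 (ti3 A i h) (tl2 A p i))
        + fc2 2 A.l2 (ti3 A i h) i + fc2 2 A.l2 i (ti3 A i h)
        - pa (P12 4) (fc2 2 A.l2 i (ti3 A i h)) + pa (P123 4) (fc2 2 A.l2 i (ti3 A i h))
        - fc2 2 A.l2 (ti2 A i h) (ti2 A i h) + pa (P23 4) (fc2 2 A.l2 (ti2 A i h) (ti2 A i h))
        - pa (P132 4) (fc2 2 A.l2 (ti2 A i h) (ti2 A i h))
        + fc3 2 A.l3 (ti2 A i h) i i - fc3 2 A.l3 i (ti2 A i h) i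
        + pa (P12 4) (fc3 2 A.l3 i (ti2 A i h) i)
        + fc3 2 A.l3 i i (ti2 A i h) - pa (P23 4) (fc3 2 A.l3 i i (ti2 A i h))
        + pa (P132 4) (fc3 2 A.l3 i i (ti2 A i h)) := by
  have hi := hret.lini
  have h2 := hret.isMultilinear_ti2
  have h3 := hret.isMultilinear_ti3
  have a1 := IsMultilinear.pc (R := 2) (m₁ := 0) (m₂ := 1) h2 hl3 (by norm_num)
  have a2 := IsMultilinear.pc (R := 2) (m₁ := 1) (m₂ := 0) h2 hl3 (by norm_num)
  have a3 := IsMultilinear.pc (R := 2) (m₁ := 0) (m₂ := 2) h3 hl2 (by norm_num)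
  have a4 := IsMultilinear.pc (R := 2) (m₁ := 1) (m₂ := 1) h3 hl2 (by norm_num)
  have a5 := IsMultilinear.pc (R := 2) (m₁ := 2) (m₂ := 0) h3 hl2 (by norm_num)
  have b1 := A.leib.lin2.fc2 (R := 2) h3 hi (by norm_num)
  have b2 := A.leib.lin2.fc2 (R := 2) hi h3 (by norm_num)
  have b3 := A.leib.lin2.fc2 (R := 2) h2 h2 (by norm_num)
  have c1 := A.leib.lin3.fc3 (R := 2) h2 hi hi (by norm_num)
  have c2 := A.leib.lin3.fc3 (R := 2) hi h2 hi (by norm_num)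
  have c3 := A.leib.lin3.fc3 (R := 2) hi hi h2 (by norm_num)
  have hr := (((((((((a1.add a2).sub (a2.pa (P12 4))).add (a2.pa (P123 4))).sub a3).add a4).sub
    (a4.pa (P12 4))).sub a5).add (a5.pa (P23 4))).sub (a5.pa (P132 4))).add b1 |>.add b2
    |>.sub (b2.pa (P12 4)) |>.add (b2.pa (P123 4)) |>.sub b3 |>.add (b3.pa (P23 4))
    |>.sub (b3.pa (P132 4)) |>.add c1 |>.sub c2 |>.add (c2.pa (P12 4)) |>.add c3
    |>.sub (c3.pa (P23 4)) |>.add (c3.pa (P132 4))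
  refine IsMultilinear.ext_four_zero
    ((hi.fc1 hlin _).sub (A.leib.lin4.fc4 hi hi hi hi _)) hr
    (fun n hn => hL' n (.inl hn)) (fun n hn => A.bound n (.inr hn)) fun X Y Z W => ?_
  simp [ti2, ti3, tl4, tl3, tl2, WL3.hl2, WL3.hl3, S_sub, S_neg, S_add, S_fc1,
    S_fc2_1_1, S_fc2_1_3, S_fc2_3_1, S_fc2_2_2,
    S_fc3_1_1_1, S_fc3_2_1_1, S_fc3_1_2_1, S_fc3_1_1_2, S_fc4_1_1_1_1,
    S_pc_0_2_1, S_pc_1_2_0, S_pc_0_3_1, S_pc_1_3_0, S_pc_0_2_2, S_pc_1_2_1, S_pc_2_2_0,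
    S_pa_P12_three, S_pa_P12_four_zero, S_pa_P23_four_zero, S_pa_P13_four_zero,
    S_pa_P123_four_zero, S_pa_P132_four_zero, Fin.sum_univ_three, Fin.sum_univ_four,
    hret.linh.one_slot, hret.linp.one_slot, A.linD.one_slot, hret.lini.one_slot,
    hret.S_i_p, el_S, A.S_target_three, A.S_D_l4_zero, A.S_D_l3, A.S_D_zero,
    A.S_D_l2, A.leib.lin2.two_slots, A.leib.lin3.three_slots]
  abel_nf

end IsDefRetract
end Retract

/-- **`i` extends to a weak morphism**: given a weak Lie 3-algebra `(L, d, λ)`, a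
deformation retract `(p, i, h)` of `(L, d)` onto `(L', d')`, and the transferred weak Lie
3-algebra structure `λ'` on `(L', d')`, the maps `i₁ = i`, `i₂ = -h∘λ2∘(i,i)`,
`i₂₁ = -h∘λ21∘(i,i)` and `i₃ = -h∘λ3∘(i,i,i) - h∘(λ2∘₁(h∘λ2) - (λ2∘₂(h∘λ2))^{1-(12)})∘(i,i,i)`
form a weak morphism `(L', d', λ') → (L, d, λ)`, i.e. satisfy (M1)–(M8). -/
theorem retract_inclusion_is_weak_morphism
    (k : Type) [CommRing k] {L L' : ℤ → Type}
    [∀ i, AddCommGroup (L i)] [∀ i, Module k (L i)]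
    [∀ i, AddCommGroup (L' i)] [∀ i, Module k (L' i)]
    (A : WeakLie3 k L)
    (D' : MMap L' L' 1 (-1)) (hlinD' : IsMultilinear k D') (hdd' : fc1 (-2) D' D' = 0)
    (hbound' : ∀ i : ℤ, (i < 0 ∨ 2 < i) → ∀ x : L' i, x = 0)
    (p : MMap L L' 1 0) (i : MMap L' L 1 0) (h : MMap L L 1 1)
    (hret : IsDefRetract k A.D D' p i h)
    (B : WeakLie3 k L')
    (hBD : B.D = D') (hB2 : B.l2 = tl2 A p i) (hB3 : B.l3 = tl3 A p i h)
    (hB4 : B.l4 = tl4 A p i h) (hB21 : B.l21 = tl21 A p i) (hB211 : B.l211 = tl211 A p i)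
    (hB31 : B.l31 = tl31 A p i h) (hB32 : B.l32 = tl32 A p i h) :
    IsWeakMorphism k B A i (ti2 A i h) (ti21 A i h) (ti3 A i h) := by
  subst hBD
  have hl2 := hB2 ▸ B.leib.lin2
  have hl3 := hB3 ▸ B.leib.lin3
  have hl21 := hB21 ▸ B.lin21
  exact
    { lin1 := hret.lini
      lin2 := hret.isMultilinear_ti2
      lin21 := hret.isMultilinear_ti21
      lin3 := hret.isMultilinear_ti3
      m1 := hret.chaini
      m2 := hB2 ▸ hret.bd_ti2
      m3 := by rw [hB2, hB3]; exact hret.bd_ti3 hbound' hlinD' hl2 hl3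
      m4 := by
        rw [hB2, hB3, hB4]
        exact hret.fc1_i_tl4 hbound' hl2 hl3 (hB4 ▸ B.leib.lin4)
      m5 := hB21 ▸ hret.bd_ti21
      m6 := hB211 ▸ hret.fc1_i_tl211 hbound' (hB211 ▸ B.lin211)
      m7 := by rw [hB21, hB31]; exact hret.fc1_i_tl31 hbound' hl21 (hB31 ▸ B.lin31)
      m8 := by rw [hB2, hB21, hB32]; exact hret.fc1_i_tl32 hbound' hl2 hl21 (hB32 ▸ B.lin32) }

end WL3
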